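/- arXiv:0801.4194 — 2 statements merged into one kernel-verified Lean document; each statement's English description precedes it below -/
import Mathlib

section
/- Let T ∈ (0,1) and suppose that Z(T) = ∑_{p ∈ dom U} 2^{−|p|/T} is a computable real number. Then: (i) T is right-computable but not left-computable; (ii) T is weakly Chaitin T-random and T-compressible; (iii) lim_{n→∞} H(T_n)/n = T. -/
open Filter

/-- A set of finite binary strings is prefix-free if no element of it is a
prefix of another (distinct) element of it. -/
def PrefixFree (S : Set (List Bool)) : Prop :=
  ∀ p ∈ S, ∀ q ∈ S, p <+: q → p = q

/-- A computer: a partial recursive function from finite binary strings to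
finite binary strings whose domain is a prefix-free set. -/
structure Computer where
  f : List Bool →. List Bool
  partrec : Partrec f
  prefixFree : PrefixFree {p | (f p).Dom}

/-- The domain of a computer. -/
def Computer.domain (C : Computer) : Set (List Bool) := {p | (C.f p).Dom}

/-- A computer `U` is optimal if every computer can be simulated on `U` with
only a constant increase in program length. -/
def IsOptimal (U : Computer) : Prop :=
  ∀ C : Computer, ∃ d : ℕ, ∀ p : List Bool, (C.f p).Dom →
    ∃ p' : List Bool, p'.length ≤ p.length + d ∧ ∀ s, s ∈ C.f p → s ∈ U.f p'

/-- Program-size complexity `H(s)`: the minimal length of a program `p`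
with `U(p) = s`. -/
noncomputable def H (U : Computer) (s : List Bool) : ℕ :=
  sInf {n | ∃ p : List Bool, p.length = n ∧ s ∈ U.f p}

/-- The `n`-th bit (`n ≥ 1`) of the base-two expansion of `x mod 1`
(the expansion chosen with infinitely many zeros). -/
noncomputable def binDigit (x : ℝ) (n : ℕ) : Bool :=
  decide (⌊Int.fract x * 2 ^ n⌋ % 2 = 1)

/-- The first `n` bits of the base-two expansion of `x mod 1` (with
infinitely many zeros). -/
noncomputable def bits (x : ℝ) (n : ℕ) : List Bool :=
  (List.range n).map fun i => binDigit x (i + 1)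

/-- A real `x` is weakly Chaitin `D`-random (w.r.t. the computer `U`). -/
def WeaklyChaitinRandom (U : Computer) (D x : ℝ) : Prop :=
  ∃ c : ℝ, ∀ n : ℕ, 1 ≤ n → D * n - c ≤ (H U (bits x n) : ℝ)

/-- A real `x` is Chaitin `D`-random (w.r.t. the computer `U`). -/
def ChaitinRandom (U : Computer) (D x : ℝ) : Prop :=
  Tendsto (fun n : ℕ => (H U (bits x n) : ℝ) - D * n) atTop atTop

/-- A real `x` is `D`-compressible (w.r.t. the computer `U`). -/
def DCompressible (U : Computer) (D x : ℝ) : Prop :=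
  Filter.limsup (fun n : ℕ => (H U (bits x n) : ℝ) / n) atTop ≤ D

/-- A computable real number. -/
def ComputableReal (T : ℝ) : Prop :=
  ∃ f : ℕ → ℚ, Computable f ∧ ∀ n : ℕ, 1 ≤ n → |T - (f n : ℝ)| < 1 / n

/-- A right-computable real number. -/
def RightComputable (T : ℝ) : Prop :=
  ∃ g : ℕ → ℚ, Computable g ∧ (∀ n, T ≤ (g n : ℝ)) ∧
    Tendsto (fun n => ((g n : ℚ) : ℝ)) atTop (nhds T)

/-- A left-computable real number. -/
def LeftComputable (T : ℝ) : Prop := RightComputable (-T)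

/-- The term `2 ^ (-|p| / T)` of the partition function `Z(T)`. -/
noncomputable def zterm (U : Computer) (T : ℝ) (p : U.domain) : ℝ :=
  (2 : ℝ) ^ (-((p : List Bool).length : ℝ) / T)

/-- The term `|p| ^ Q * 2 ^ (-|p| / T)` of `W(Q,T)`. -/
noncomputable def wterm (U : Computer) (Q T : ℝ) (p : U.domain) : ℝ :=
  ((p : List Bool).length : ℝ) ^ Q * (2 : ℝ) ^ (-((p : List Bool).length : ℝ) / T)

/-- The term `|p| * 2 ^ (-|p| / T)` of `W(1,T)`. -/
noncomputable def wlterm (U : Computer) (T : ℝ) (p : U.domain) : ℝ :=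
  ((p : List Bool).length : ℝ) * (2 : ℝ) ^ (-((p : List Bool).length : ℝ) / T)

/-- The term `|p| ^ 2 * 2 ^ (-|p| / T)` of `W(2,T)`. -/
noncomputable def wsqterm (U : Computer) (T : ℝ) (p : U.domain) : ℝ :=
  ((p : List Bool).length : ℝ) ^ 2 * (2 : ℝ) ^ (-((p : List Bool).length : ℝ) / T)

/-- A lower-computable function `f : ℕ⁺ → [0,∞)` (represented on `ℕ`,
with all conditions imposed on positive arguments). -/
def LowerComputableFun (f : ℕ → ℝ) : Prop :=
  ∃ a : ℕ → ℕ → ℚ, Computable₂ a ∧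
    (∀ k n : ℕ, 1 ≤ k → 1 ≤ n → (a k n : ℝ) ≤ f n) ∧
    (∀ n : ℕ, 1 ≤ n → Tendsto (fun k => ((a k n : ℚ) : ℝ)) atTop (nhds (f n)))

/-- A lower-computable semi-measure on finite binary strings. -/
def LowerComputableSemiMeasure (r : List Bool → ℝ) : Prop :=
  (∀ s, 0 ≤ r s) ∧ (∀ s, r s ≤ 1) ∧ Summable r ∧ (∑' s, r s) ≤ 1 ∧
    ∃ f : ℕ → List Bool → ℚ, Computable₂ f ∧
      (∀ n s, ((f n s : ℚ) : ℝ) ≤ r s) ∧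
      (∀ s, Tendsto (fun n => ((f n s : ℚ) : ℝ)) atTop (nhds (r s)))

/-- A universal probability. -/
def UniversalProbability (m : List Bool → ℝ) : Prop :=
  LowerComputableSemiMeasure m ∧
    ∀ r : List Bool → ℝ, LowerComputableSemiMeasure r →
      ∃ c : ℝ, 0 < c ∧ ∀ s, c * r s ≤ m s

theorem encode_rat (q : ℚ) : @Encodable.encode ℚ Primcodable.toEncodable q =
    @List.countP ℕ (fun y => @decide (y ∈ Set.range (@Encodable.encode ℚ Rat.instEncodable)) (Encodable.decidableRangeEncode ℚ _))
     (List.range (@Encodable.encode ℚ Rat.instEncodable q)) := by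
  rfl
theorem encode_rat' (q : ℚ) : @Encodable.encode ℚ Rat.instEncodable q = Nat.pair (Encodable.encode q.num) q.den := by
  rfl
theorem encode_int (z : ℤ) : Encodable.encode z = if 0 ≤ z then 2 * z.natAbs else 2 * z.natAbs - 1 := by
  cases z with
  | ofNat n => rfl
  | negSucc n => simp; rfl

def RatCode (y : ℕ) : Prop :=
  0 < y.unpair.2 ∧ ∀ d < y + 1, ((y.unpair.1 + 1) / 2 % d = 0 ∧ y.unpair.2 % d = 0 → d ≤ 1)

theorem mem_range_rat (y : ℕ) : y ∈ Set.range (@Encodable.encode ℚ Rat.instEncodable) ↔ RatCode y := by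
  constructor
  · rintro ⟨q, rfl⟩
    rw [encode_rat']
    refine ⟨by simpa using q.den_pos, ?_⟩
    rintro d - ⟨h1, h2⟩
    simp only [Nat.unpair_pair] at h1 h2
    have h3 : (Encodable.encode q.num + 1) / 2 = q.num.natAbs := by
      rw [encode_int]; split_ifs <;> omega
    rw [h3] at h1
    have := Nat.dvd_gcd (Nat.dvd_of_mod_eq_zero h1) (Nat.dvd_of_mod_eq_zero h2)
    rw [q.reduced] at this
    exact Nat.le_of_dvd one_pos this
  · rintro ⟨h0, h⟩
    obtain ⟨z, hz⟩ := Equiv.intEquivNat.surjective y.unpair.1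
    have hz' : Encodable.encode z = y.unpair.1 := hz
    have h3 : (y.unpair.1 + 1) / 2 = z.natAbs := by
      rw [← hz', encode_int]; split_ifs <;> omega
    have hc : z.natAbs.Coprime y.unpair.2 := by
      have hle := Nat.le_of_dvd h0 (Nat.gcd_dvd_right z.natAbs y.unpair.2)
      have := h (Nat.gcd z.natAbs y.unpair.2) (by have := Nat.unpair_right_le y; omega)
        ⟨by rw [h3]; exact Nat.mod_eq_zero_of_dvd (Nat.gcd_dvd_left _ _), Nat.mod_eq_zero_of_dvd (Nat.gcd_dvd_right _ _)⟩
      have h4 := Nat.gcd_pos_of_pos_right z.natAbs h0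
      unfold Nat.Coprime; omega
    refine ⟨⟨z, y.unpair.2, by omega, hc⟩, ?_⟩
    rw [encode_rat', hz']; simp

theorem primrec_ratCode : PrimrecPred RatCode := by
  unfold RatCode
  have hu1 : Primrec fun y : ℕ => y.unpair.1 := Primrec.fst.comp Primrec.unpair
  have hu2 : Primrec fun y : ℕ => y.unpair.2 := Primrec.snd.comp Primrec.unpair
  have hR : PrimrecRel fun d y : ℕ => ((y.unpair.1 + 1) / 2 % d = 0 ∧ y.unpair.2 % d = 0 → d ≤ 1) := by
    have h1 : PrimrecRel fun d y : ℕ => (y.unpair.1 + 1) / 2 % d = 0 :=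
      Primrec.eq.comp (Primrec.nat_mod.comp (Primrec.nat_div.comp (Primrec.succ.comp (hu1.comp Primrec.snd)) (Primrec.const 2)) Primrec.fst) (Primrec.const 0)
    have h2 : PrimrecRel fun d y : ℕ => y.unpair.2 % d = 0 :=
      Primrec.eq.comp (Primrec.nat_mod.comp (hu2.comp Primrec.snd) Primrec.fst) (Primrec.const 0)
    have h3 : PrimrecRel fun d y : ℕ => d ≤ 1 := Primrec.nat_le.comp Primrec.fst (Primrec.const 1)
    refine PrimrecPred.of_eq (PrimrecPred.or (PrimrecPred.not (PrimrecPred.and h1 h2)) h3) ?_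
    intro n; tauto
  exact PrimrecPred.and (Primrec.nat_lt.comp (Primrec.const 0) hu2)
    (hR.forall_lt.comp Primrec.succ Primrec.id)

theorem primrec_countP {p : ℕ → Bool} (hp : Primrec p) :
    Primrec fun n => (List.range n).countP p := by
  refine (Primrec.nat_rec₁ (f := fun n c => bif p n then c + 1 else c) 0
    (Primrec.cond (hp.comp Primrec.fst) (Primrec.succ.comp Primrec.snd) Primrec.snd)).of_eq ?_
  intro n
  induction n with
  | zero => rfl
  | succ n ih =>
    rw [List.range_succ, List.countP_append, ← ih]
    cases h : p n <;> simp [h]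

theorem computable_ratCode :
    Computable fun q : ℚ => Nat.pair (Encodable.encode q.num) q.den := by
  classical
  have hd : Primrec fun y => decide (RatCode y) := primrec_ratCode.decide
  have hC := primrec_countP hd
  have hP : Partrec fun q : ℚ => Nat.rfind fun x =>
      Part.some (decide (RatCode x) && decide ((List.range x).countP (fun y => decide (RatCode y)) =
        @Encodable.encode ℚ Primcodable.toEncodable q)) := by
    refine Partrec.rfind (Computable.partrec ?_)
    refine Primrec.to_comp (Primrec.and.comp (hd.comp Primrec.snd) ?_)
    exact PrimrecPred.decide (Primrec.eq.comp (hC.comp Primrec.snd) (Primrec.encode.comp Primrec.fst))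
  refine hP.of_eq_tot ?_
  intro q
  rw [← encode_rat']
  have hcount : ∀ q : ℚ, (List.range (@Encodable.encode ℚ Rat.instEncodable q)).countP (fun y => decide (RatCode y)) =
      @Encodable.encode ℚ Primcodable.toEncodable q := by
    intro q
    rw [encode_rat]
    congr 1; funext y
    exact decide_eq_decide.2 (mem_range_rat y).symm
  have hmem : ∀ q : ℚ, RatCode (@Encodable.encode ℚ Rat.instEncodable q) :=
    fun q => (mem_range_rat _).1 ⟨q, rfl⟩
  have hspec : ∀ x, (decide (RatCode x) && decide ((List.range x).countP (fun y => decide (RatCode y)) =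
        @Encodable.encode ℚ Primcodable.toEncodable q)) = true ↔ x = @Encodable.encode ℚ Rat.instEncodable q := by
    intro x
    simp only [Bool.and_eq_true, decide_eq_true_eq]
    constructor
    · rintro ⟨h1, h2⟩
      obtain ⟨q', rfl⟩ := (mem_range_rat x).2 h1
      rw [hcount] at h2
      rw [@Encodable.encode_injective ℚ Primcodable.toEncodable _ _ h2]
    · rintro rfl; exact ⟨hmem q, hcount q⟩
  refine Nat.mem_rfind.2 ⟨?_, ?_⟩
  · exact Part.mem_some_iff.2 ((hspec _).2 rfl).symm
  · intro m hm
    rw [Part.mem_some_iff]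
    symm
    rw [← Bool.not_eq_true, hspec]
    omega

theorem computable_den : Computable fun q : ℚ => q.den :=
  ((Primrec.snd.comp Primrec.unpair).to_comp.comp computable_ratCode).of_eq (by intro q; simp)

theorem primrec_int_toNat : Primrec fun c : ℕ => if c % 2 = 0 then c / 2 else 0 :=
  Primrec.ite (Primrec.eq.comp (Primrec.nat_mod.comp Primrec.id (Primrec.const 2)) (Primrec.const 0))
   (Primrec.nat_div.comp Primrec.id (Primrec.const 2)) (Primrec.const 0)

theorem primrec_int_toNat' : Primrec fun c : ℕ => if c % 2 = 0 then 0 else (c + 1) / 2 :=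
  Primrec.ite (Primrec.eq.comp (Primrec.nat_mod.comp Primrec.id (Primrec.const 2)) (Primrec.const 0))
   (Primrec.const 0) (Primrec.nat_div.comp Primrec.succ (Primrec.const 2))

theorem computable_num : Computable fun q : ℚ => q.num.toNat :=
  (primrec_int_toNat.to_comp.comp ((Primrec.fst.comp Primrec.unpair).to_comp.comp computable_ratCode)).of_eq (by
    intro q; simp only [Nat.unpair_pair, encode_int]; split_ifs <;> omega)

theorem computable_neg_num : Computable fun q : ℚ => (-q.num).toNat :=
  (primrec_int_toNat'.to_comp.comp ((Primrec.fst.comp Primrec.unpair).to_comp.comp computable_ratCode)).of_eq (by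
    intro q; simp only [Nat.unpair_pair, encode_int]; split_ifs <;> omega)

structure Stp (U : Computer) where
  st : ℕ → List Bool → Option (List Bool)
  prim : Primrec₂ st
  spec : ∀ p s, s ∈ U.f p ↔ ∃ k, st k p = some s
  mono : ∀ k k' p s, k ≤ k' → st k p = some s → st k' p = some s

theorem exists_stp (U : Computer) : Nonempty (Stp U) := by
  obtain ⟨c, hc⟩ := Nat.Partrec.Code.exists_code.1 U.partrec
  refine ⟨⟨fun k p => (Nat.Partrec.Code.evaln k c (Encodable.encode p)).bind Encodable.decode, ?_, ?_, ?_⟩⟩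
  · refine Primrec.option_bind (Nat.Partrec.Code.primrec_evaln.comp
      (Primrec.pair (Primrec.pair Primrec.fst (Primrec.const c)) (Primrec.encode.comp Primrec.snd))) ?_
    exact Primrec.decode.comp Primrec.snd
  · intro p s
    have h1 : ∀ n, n ∈ c.eval (Encodable.encode p) ↔ ∃ s ∈ U.f p, Encodable.encode s = n := by
      intro n
      rw [hc]
      simp [Encodable.encodek, Part.mem_map_iff]
    constructor
    · intro h
      obtain ⟨k, hk⟩ := Nat.Partrec.Code.evaln_complete.1 ((h1 _).2 ⟨s, h, rfl⟩)
      refine ⟨k, ?_⟩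
      rw [Option.mem_def.1 hk]; simp
    · rintro ⟨k, hk⟩
      rw [Option.bind_eq_some_iff] at hk
      obtain ⟨n, hn, hs⟩ := hk
      obtain ⟨s', hs', e⟩ := (h1 n).1 (Nat.Partrec.Code.evaln_sound hn)
      subst e
      simp at hs
      rwa [← hs]
  · intro k k' p s hkk h
    rw [Option.bind_eq_some_iff] at h ⊢
    obtain ⟨n, hn, hs⟩ := h
    exact ⟨n, Nat.Partrec.Code.evaln_mono hkk hn, hs⟩

theorem H_le {U : Computer} {s p : List Bool} (h : s ∈ U.f p) : H U s ≤ p.length :=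
  Nat.sInf_le ⟨p, rfl, h⟩

theorem machine (U : Computer) (hU : IsOptimal U) {α : Type} [Primcodable α]
    (R : List Bool → α → Bool) (hR : Computable₂ R) (g : α → List Bool) (hg : Computable g)
    (hpf : ∀ p q x y, R p x = true → R q y = true → p <+: q → p = q) :
    ∃ d : ℕ, ∀ p x, R p x = true → ∃ x', R p x' = true ∧ H U (g x') ≤ p.length + d := by
  let o : List Bool → ℕ → Option (List Bool) := fun p n =>
    (Encodable.decode (α := α) n).bind fun x => bif R p x then some (g x) else none
  have ho : Computable₂ o := by
    refine Computable.option_bind (Computable.decode.comp Computable.snd) ?_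
    exact Computable.cond (hR.comp (Computable.fst.comp Computable.fst) Computable.snd)
      (Computable.option_some.comp (hg.comp Computable.snd)) (Computable.const none)
  have hmem : ∀ p n s, s ∈ o p n → ∃ x, R p x = true ∧ g x = s := by
    intro p n s h
    simp only [o, Option.mem_def, Option.bind_eq_some_iff] at h
    obtain ⟨x, -, hx⟩ := h
    refine ⟨x, ?_⟩
    cases hb : R p x <;> simp_all
  have hdom : ∀ p, (Nat.rfindOpt (o p)).Dom ↔ ∃ x, R p x = true := by
    intro p
    rw [Nat.rfindOpt_dom]
    constructor
    · rintro ⟨n, s, h⟩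
      obtain ⟨x, hx, -⟩ := hmem p n s h
      exact ⟨x, hx⟩
    · rintro ⟨x, hx⟩
      exact ⟨Encodable.encode x, g x, by simp [o, hx]⟩
  let C : Computer := ⟨fun p => Nat.rfindOpt (o p), Partrec.rfindOpt ho, by
    intro p hp q hq hpq
    obtain ⟨x, hx⟩ := (hdom p).1 hp
    obtain ⟨y, hy⟩ := (hdom q).1 hq
    exact hpf p q x y hx hy hpq⟩
  obtain ⟨d, hd⟩ := hU C
  refine ⟨d, fun p x hx => ?_⟩
  have hp := (hdom p).2 ⟨x, hx⟩
  obtain ⟨p', hp', hs⟩ := hd p hp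
  obtain ⟨n, hn⟩ := Nat.rfindOpt_spec (Part.get_mem hp)
  obtain ⟨x', hx', e⟩ := hmem p n _ hn
  refine ⟨x', hx', (H_le ?_).trans hp'⟩
  rw [e]
  exact hs _ (Part.get_mem hp)

theorem exists_prog (U : Computer) (hU : IsOptimal U) (s : List Bool) : ∃ p, s ∈ U.f p := by
  let C : Computer := ⟨fun p => Part.assert (p = []) fun _ => Part.some s, by
    have : Partrec fun p : List Bool => ((if p = [] then some s else none : Option (List Bool)) : Part (List Bool)) := by
      refine Computable.ofOption (Primrec.to_comp ?_)
      exact Primrec.ite (Primrec.eq.comp Primrec.id (Primrec.const [])) (Primrec.const _) (Primrec.const _)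
    refine this.of_eq ?_
    intro p
    by_cases h : p = []
    · simp [h, Part.assert_pos]
    · simp [h, Part.assert_neg], by
    intro p hp q hq _
    have h1 : p = [] := by obtain ⟨h, -⟩ := hp; exact h
    have h2 : q = [] := by obtain ⟨h, -⟩ := hq; exact h
    rw [h1, h2]⟩
  obtain ⟨d, hd⟩ := hU C
  obtain ⟨p', -, h⟩ := hd [] ⟨rfl, trivial⟩
  exact ⟨p', h s (by simp [C, Part.assert_pos])⟩

theorem exists_min_prog (U : Computer) (hU : IsOptimal U) (s : List Bool) :
    ∃ p, s ∈ U.f p ∧ p.length = H U s := by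
  have : H U s ∈ {n | ∃ p : List Bool, p.length = n ∧ s ∈ U.f p} := by
    apply Nat.sInf_mem
    obtain ⟨p, hp⟩ := exists_prog U hU s
    exact ⟨_, p, rfl, hp⟩
  obtain ⟨p, h1, h2⟩ := this
  exact ⟨p, h2, h1⟩

namespace Stp
variable {U : Computer} (S : Stp U)

def progs (k : ℕ) : List (List Bool) :=
  (List.range k).filterMap fun i => (Encodable.decode₂ (List Bool) i).bind fun p =>
    bif (S.st k p).isSome then some p else none

def out (k : ℕ) : List Bool := true :: ((S.progs k).filterMap (S.st k)).flatten

theorem primrec_progs : Primrec S.progs := by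
  refine Primrec.listFilterMap Primrec.list_range ?_
  refine Primrec.option_bind (Primrec.decode₂.comp Primrec.snd) ?_
  exact Primrec.cond (Primrec.option_isSome.comp (S.prim.comp (Primrec.fst.comp Primrec.fst) Primrec.snd))
    (Primrec.option_some.comp Primrec.snd) (Primrec.const none)

theorem primrec_out : Primrec S.out := by
  refine Primrec.list_cons.comp (Primrec.const true) (Primrec.list_flatten.comp ?_)
  exact Primrec.listFilterMap S.primrec_progs S.prim

theorem mem_progs {k : ℕ} {p : List Bool} :
    p ∈ S.progs k ↔ Encodable.encode p < k ∧ ∃ s, S.st k p = some s := by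
  unfold progs
  rw [List.mem_filterMap]
  constructor
  · rintro ⟨i, hi, h⟩
    rw [Option.bind_eq_some_iff] at h
    obtain ⟨q, hq, h⟩ := h
    cases hb : (S.st k q).isSome
    · simp [hb] at h
    · simp [hb] at h
      subst h
      refine ⟨?_, Option.isSome_iff_exists.1 hb⟩
      rw [Encodable.mem_decode₂.1 hq]; simpa using hi
  · rintro ⟨h1, s, hs⟩
    refine ⟨Encodable.encode p, by simpa using h1, ?_⟩
    simp [hs, Encodable.encodek₂]

theorem nodup_progs (k : ℕ) : (S.progs k).Nodup := by
  unfold progs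
  refine List.Nodup.filterMap ?_ List.nodup_range
  intro i j p hi hj
  have key : ∀ i, p ∈ (Encodable.decode₂ (List Bool) i).bind (fun p =>
    bif (S.st k p).isSome then some p else none) → Encodable.encode p = i := by
    intro i hi
    rw [Option.mem_def, Option.bind_eq_some_iff] at hi
    obtain ⟨q, hq, h⟩ := hi
    have := Encodable.mem_decode₂.1 hq
    cases hb : (S.st k q).isSome <;> simp_all
  exact (key i hi).symm.trans (key j hj)

theorem mem_out {k : ℕ} {p s : List Bool} (hp : p ∈ S.progs k) (hs : s ∈ U.f p) : s ≠ S.out k := by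
  obtain ⟨h1, s', hs'⟩ := S.mem_progs.1 hp
  have : s' = s := Part.mem_unique ((S.spec p s').2 ⟨k, hs'⟩) hs
  subst this
  have hmem : s' ∈ (S.progs k).filterMap (S.st k) := List.mem_filterMap.2 ⟨p, hp, hs'⟩
  have hlen := List.Sublist.length_le (List.sublist_flatten_of_mem hmem)
  intro e
  have := congrArg List.length e
  simp only [out, List.length_cons] at this
  omega

end Stp

theorem primrec_pow : Primrec₂ ((· ^ ·) : ℕ → ℕ → ℕ) :=
  Primrec₂.unpaired'.1 Nat.Primrec.pow

theorem primrec_list_sum : Primrec (List.sum : List ℕ → ℕ) := by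
  refine (Primrec.list_foldr (h := fun _ (p : ℕ × ℕ) => p.1 + p.2) Primrec.id (Primrec.const 0)
    (Primrec.nat_add.comp (Primrec.fst.comp Primrec.snd) (Primrec.snd.comp Primrec.snd))).of_eq ?_
  intro l; rfl

theorem primrec_replicate : Primrec fun n : ℕ => List.replicate n true := by
  refine (Primrec.list_map Primrec.list_range (Primrec₂.const true)).of_eq ?_
  intro n; simp [List.map_const']

def ef (l a b M : ℕ) : ℕ := Nat.findGreatest (fun c => c ^ a * 2 ^ (l * b) ≤ 2 ^ (M * a)) (2 ^ M)

theorem primrec_ef {α : Type} [Primcodable α] {l a b M : α → ℕ} (hl : Primrec l) (ha : Primrec a)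
    (hb : Primrec b) (hM : Primrec M) : Primrec fun x => ef (l x) (a x) (b x) (M x) := by
  unfold ef
  refine Primrec.nat_findGreatest (primrec_pow.comp (Primrec.const 2) hM) ?_
  refine Primrec.nat_le.comp (Primrec.nat_mul.comp (primrec_pow.comp Primrec.snd (ha.comp Primrec.fst))
    (primrec_pow.comp (Primrec.const 2) ((Primrec.nat_mul.comp hl hb).comp Primrec.fst)))
    (primrec_pow.comp (Primrec.const 2) ((Primrec.nat_mul.comp hM ha).comp Primrec.fst))

theorem ef_iff {l a b M c : ℕ} (ha : 0 < a) :
    c ^ a * 2 ^ (l * b) ≤ 2 ^ (M * a) ↔ (c : ℝ) ≤ 2 ^ M * (2 : ℝ) ^ (-(l : ℝ) / ((a : ℝ) / b)) := by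
  set x : ℝ := 2 ^ M * (2 : ℝ) ^ (-(l : ℝ) / ((a : ℝ) / b)) with hx
  have hx0 : 0 ≤ x := by positivity
  have ha' : (a : ℝ) ≠ 0 := by positivity
  have hxa : x ^ a * 2 ^ (l * b) = 2 ^ (M * a) := by
    rw [hx, mul_pow, ← pow_mul, mul_assoc, ← Real.rpow_natCast ((2 : ℝ) ^ (_ : ℝ)), ← Real.rpow_mul (by norm_num),
      ← Real.rpow_natCast 2 (l * b), ← Real.rpow_add (by norm_num)]
    have : -(l : ℝ) / ((a : ℝ) / b) * a + ((l * b : ℕ) : ℝ) = 0 := by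
      rw [div_div_eq_mul_div]; push_cast; field_simp; ring
    rw [this]; simp
  rw [← pow_le_pow_iff_left₀ (by positivity) hx0 ha.ne', ← mul_le_mul_iff_left₀ (show (0 : ℝ) < 2 ^ (l * b) by positivity), hxa]
  norm_cast

theorem ef_le {l a b M : ℕ} (ha : 0 < a) :
    (ef l a b M : ℝ) ≤ 2 ^ M * (2 : ℝ) ^ (-(l : ℝ) / ((a : ℝ) / b)) := by
  rw [← ef_iff ha]
  exact Nat.findGreatest_spec (P := fun c => c ^ a * 2 ^ (l * b) ≤ 2 ^ (M * a)) (Nat.zero_le _)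
    (by simp [ha.ne'])

theorem lt_ef {l a b M : ℕ} (ha : 0 < a) :
    2 ^ M * (2 : ℝ) ^ (-(l : ℝ) / ((a : ℝ) / b)) ≤ ef l a b M + 1 := by
  by_contra! h
  have h1 : ((ef l a b M + 1 : ℕ) : ℝ) ≤ 2 ^ M * (2 : ℝ) ^ (-(l : ℝ) / ((a : ℝ) / b)) := by
    push_cast; exact h.le
  rw [← ef_iff ha] at h1
  by_cases h2 : ef l a b M + 1 ≤ 2 ^ M
  · have := Nat.le_findGreatest (P := fun c => c ^ a * 2 ^ (l * b) ≤ 2 ^ (M * a)) h2 h1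
    unfold ef at this
    omega
  · have h3 : (2 : ℝ) ^ (-(l : ℝ) / ((a : ℝ) / b)) ≤ 1 := by
      apply Real.rpow_le_one_of_one_le_of_nonpos (by norm_num)
      rw [neg_div]; have : 0 ≤ (l : ℝ) / ((a : ℝ) / b) := by positivity
      linarith
    have h4 : (2 : ℝ) ^ M < ef l a b M + 1 := by push Not at h2; exact_mod_cast h2
    have h5 : (2 : ℝ) ^ M * (2 : ℝ) ^ (-(l : ℝ) / ((a : ℝ) / b)) ≤ 2 ^ M * 1 := by gcongr
    linarith

namespace Stp
variable {U : Computer} (S : Stp U)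

noncomputable def Zk (k : ℕ) (t : ℝ) : ℝ :=
  ∑ p ∈ (S.progs k).toFinset, (2 : ℝ) ^ (-(p.length : ℝ) / t)

def zs (k a b M : ℕ) : ℕ := ((S.progs k).map fun p => ef p.length a b M).sum

theorem primrec_zs {α : Type} [Primcodable α] {k a b M : α → ℕ} (hk : Primrec k) (ha : Primrec a)
    (hb : Primrec b) (hM : Primrec M) : Primrec fun x => S.zs (k x) (a x) (b x) (M x) := by
  unfold zs
  refine primrec_list_sum.comp (Primrec.list_map (S.primrec_progs.comp hk) ?_)
  exact primrec_ef (Primrec.list_length.comp Primrec.snd) (ha.comp Primrec.fst) (hb.comp Primrec.fst) (hM.comp Primrec.fst)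

theorem zs_eq (k a b M : ℕ) : (S.zs k a b M : ℝ) = ∑ p ∈ (S.progs k).toFinset, (ef p.length a b M : ℝ) := by
  unfold zs
  rw [← List.sum_toFinset _ (S.nodup_progs k)]
  push_cast; rfl

theorem zs_le {k a b M : ℕ} (ha : 0 < a) : (S.zs k a b M : ℝ) ≤ 2 ^ M * S.Zk k ((a : ℝ) / b) := by
  rw [zs_eq, Zk, Finset.mul_sum]
  exact Finset.sum_le_sum fun p _ => ef_le ha

theorem le_zs {k a b M : ℕ} (ha : 0 < a) :
    2 ^ M * S.Zk k ((a : ℝ) / b) ≤ S.zs k a b M + (S.progs k).length := by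
  rw [zs_eq, Zk, Finset.mul_sum, ← List.toFinset_card_of_nodup (S.nodup_progs k), Finset.cast_card, ← Finset.sum_add_distrib]
  exact Finset.sum_le_sum fun p _ => lt_ef ha

end Stp

theorem exists_F {Z : ℝ} (hZ0 : 0 ≤ Z) (hZ : ComputableReal Z) :
    ∃ F : ℕ → ℕ, Computable F ∧ ∀ M, |Z * 2 ^ M - F M| ≤ 2 := by
  obtain ⟨f, hf, h⟩ := hZ
  have hp : Primrec fun M : ℕ => 2 ^ M := primrec_pow.comp (Primrec.const 2) Primrec.id
  have hf' : Computable fun M : ℕ => f (2 ^ M) := hf.comp hp.to_comp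
  refine ⟨fun M => (f (2 ^ M)).num.toNat * 2 ^ M / (f (2 ^ M)).den, ?_, ?_⟩
  · exact Primrec.nat_div.to_comp.comp (Primrec.nat_mul.to_comp.comp (computable_num.comp hf') hp.to_comp)
      (computable_den.comp hf')
  · intro M
    have h1 := h (2 ^ M) Nat.one_le_two_pow
    set q := f (2 ^ M)
    have hden : (0 : ℝ) < q.den := by exact_mod_cast q.den_pos
    have hM : (0 : ℝ) < 2 ^ M := by positivity
    set y : ℝ := (q.num.toNat : ℝ) / q.den with hy
    have h2 : |Z - y| ≤ |Z - q| := by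
      rcases le_total 0 q.num with hq | hq
      · have : y = q := by
          rw [hy, Rat.cast_def]
          congr 1
          have := Int.toNat_of_nonneg hq
          exact_mod_cast this
        rw [this]
      · have hy0 : y = 0 := by rw [hy, Int.toNat_eq_zero.2 hq]; simp
        have : (q : ℝ) ≤ 0 := by exact_mod_cast Rat.num_nonpos.1 hq
        rw [hy0, sub_zero, abs_of_nonneg hZ0, abs_of_nonneg (by linarith)]
        linarith
    have h3 : |Z * 2 ^ M - y * 2 ^ M| ≤ 1 := by
      rw [← sub_mul, abs_mul, abs_of_pos hM]
      push_cast at h1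
      have := h2.trans h1.le
      calc |Z - y| * 2 ^ M ≤ 1 / 2 ^ M * 2 ^ M := by gcongr
        _ = 1 := by field_simp
    have h4 : y * 2 ^ M = ((q.num.toNat * 2 ^ M : ℕ) : ℝ) / q.den := by
      rw [hy]; push_cast; ring
    have h5 : |y * 2 ^ M - ((q.num.toNat * 2 ^ M / q.den : ℕ) : ℝ)| ≤ 1 := by
      rw [h4, abs_le]
      have e1 := @Nat.cast_div_le ℝ _ _ _ (q.num.toNat * 2 ^ M) q.den
      have e2 : ((q.num.toNat * 2 ^ M : ℕ) : ℝ) / q.den ≤ ((q.num.toNat * 2 ^ M / q.den : ℕ) : ℝ) + 1 := by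
        rw [div_le_iff₀ hden]
        have := Nat.lt_div_mul_add q.den_pos (a := q.num.toNat * 2 ^ M)
        have h6 : ((q.num.toNat * 2 ^ M : ℕ) : ℝ) ≤ ((q.num.toNat * 2 ^ M / q.den * q.den + q.den : ℕ) : ℝ) := by
          exact_mod_cast this.le
        push_cast at h6 ⊢
        linarith
      constructor <;> linarith
    have := abs_add_le (Z * 2 ^ M - y * 2 ^ M) (y * 2 ^ M - ((q.num.toNat * 2 ^ M / q.den : ℕ) : ℝ))
    rw [sub_add_sub_cancel] at this
    linarith

theorem nil_not_dom (U : Computer) (hU : IsOptimal U) : [] ∉ U.domain := by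
  intro h
  obtain ⟨p, hp⟩ := exists_prog U hU []
  obtain ⟨q, hq⟩ := exists_prog U hU [true]
  have hp' : p ∈ U.domain := Part.dom_iff_mem.2 ⟨_, hp⟩
  have hq' : q ∈ U.domain := Part.dom_iff_mem.2 ⟨_, hq⟩
  have e1 := U.prefixFree _ h _ hp' (List.nil_prefix)
  have e2 := U.prefixFree _ h _ hq' (List.nil_prefix)
  subst e1; subst e2
  have := Part.mem_unique hp hq
  simp at this

theorem pf_unique {D : Set (List Bool)} (hD : PrefixFree D) (h0 : [] ∉ D) :
    InformationTheory.UniquelyDecodable D := by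
  intro L1
  induction L1 with
  | nil =>
    intro L2 _ h2 h
    cases L2 with
    | nil => rfl
    | cons a L => 
      have : a = [] := by simp at h; exact h.1
      exact absurd (h2 a (by simp)) (this ▸ h0)
  | cons a L ih =>
    intro L2 h1 h2 h
    cases L2 with
    | nil =>
      have : a = [] := by simp at h; exact h.1
      exact absurd (h1 a (by simp)) (this ▸ h0)
    | cons b L' =>
      simp only [List.flatten_cons] at h
      have ha := h1 a (by simp)
      have hb := h2 b (by simp)
      have e : a = b := by
        have p1 : a <+: b ++ L'.flatten := h ▸ List.prefix_append _ _
        rcases List.prefix_or_prefix_of_prefix p1 (List.prefix_append b _) with h | h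
        · exact hD _ ha _ hb h
        · exact (hD _ hb _ ha h).symm
      subst e
      rw [ih L' (fun w hw => h1 w (by simp [hw])) (fun w hw => h2 w (by simp [hw])) (List.append_cancel_left h)]

theorem kraft (U : Computer) (hU : IsOptimal U) (A : Finset (List Bool)) (hA : ∀ p ∈ A, p ∈ U.domain) :
    ∑ p ∈ A, (2 : ℝ) ^ (-(p.length : ℝ)) ≤ 1 := by
  have h : InformationTheory.UniquelyDecodable (A : Set (List Bool)) :=
    pf_unique (fun p hp q hq => U.prefixFree p (hA p hp) q (hA q hq)) (fun h => nil_not_dom U hU (hA _ h))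
  refine le_trans (le_of_eq ?_) (InformationTheory.kraft_mcmillan_inequality h)
  refine Finset.sum_congr rfl fun p _ => ?_
  rw [Real.rpow_neg (by norm_num), Real.rpow_natCast]
  simp

theorem term_le {l : ℕ} {t : ℝ} (ht : 0 < t) (ht1 : t ≤ 1) :
    (2 : ℝ) ^ (-(l : ℝ) / t) ≤ (2 : ℝ) ^ (-(l : ℝ)) := by
  apply Real.rpow_le_rpow_of_exponent_le (by norm_num)
  rw [neg_div, neg_le_neg_iff, le_div_iff₀ ht]
  nlinarith [Nat.cast_nonneg (α := ℝ) l]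

theorem summable_zterm (U : Computer) (hU : IsOptimal U) {t : ℝ} (ht : 0 < t) (ht1 : t ≤ 1) :
    Summable (zterm U t) := by
  refine summable_of_sum_le (c := 1) (fun p => by unfold zterm; positivity) ?_
  intro u
  calc ∑ p ∈ u, zterm U t p ≤ ∑ p ∈ u, (2 : ℝ) ^ (-((p : List Bool).length : ℝ)) :=
        Finset.sum_le_sum fun p _ => term_le ht ht1
    _ = ∑ p ∈ u.map (Function.Embedding.subtype _), (2 : ℝ) ^ (-(p.length : ℝ)) := by
        rw [Finset.sum_map]; rfl
    _ ≤ 1 := kraft U hU _ (by simp only [Finset.mem_map]; rintro p ⟨q, _, rfl⟩; exact q.2)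

namespace Stp
variable {U : Computer} (S : Stp U)

theorem progs_mono {k k' : ℕ} (h : k ≤ k') {p : List Bool} (hp : p ∈ S.progs k) : p ∈ S.progs k' := by
  rw [mem_progs] at *
  exact ⟨by omega, hp.2.imp fun s hs => S.mono _ _ _ _ h hs⟩

theorem progs_dom {k : ℕ} {p : List Bool} (hp : p ∈ S.progs k) : p ∈ U.domain := by
  rw [mem_progs] at *
  obtain ⟨_, s, hs⟩ := hp
  exact Part.dom_iff_mem.2 ⟨s, (S.spec _ _).2 ⟨_, hs⟩⟩

theorem dom_progs {p : List Bool} (hp : p ∈ U.domain) : ∃ k, p ∈ S.progs k := by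
  obtain ⟨s, hs⟩ := Part.dom_iff_mem.1 hp
  obtain ⟨k, hk⟩ := (S.spec _ _).1 hs
  refine ⟨max k (Encodable.encode p + 1), ?_⟩
  rw [mem_progs]
  exact ⟨by omega, s, S.mono _ _ _ _ (le_max_left _ _) hk⟩

theorem Zk_mono_k {k k' : ℕ} (h : k ≤ k') (t : ℝ) : S.Zk k t ≤ S.Zk k' t := by
  unfold Zk
  refine Finset.sum_le_sum_of_subset_of_nonneg ?_ (fun _ _ _ => by positivity)
  intro p hp
  simp only [List.mem_toFinset] at *
  exact S.progs_mono h hp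

theorem Zk_sub {k k' : ℕ} (h : k ≤ k') (t : ℝ) : S.Zk k' t - S.Zk k t =
    ∑ p ∈ (S.progs k').toFinset \ (S.progs k).toFinset, (2 : ℝ) ^ (-(p.length : ℝ) / t) := by
  unfold Zk
  rw [Finset.sum_sdiff_eq_sub]
  intro p hp
  simp only [List.mem_toFinset] at *
  exact S.progs_mono h hp

theorem Zk_tendsto (hU : IsOptimal U) {t : ℝ} (ht : 0 < t) (ht1 : t ≤ 1) :
    Tendsto (fun k => S.Zk k t) atTop (nhds (∑' p, zterm U t p)) := by
  classical
  have h := (summable_zterm U hU ht ht1).hasSum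
  have h2 : Tendsto (fun k => (S.progs k).toFinset.subtype (· ∈ U.domain)) atTop atTop := by
    apply tendsto_atTop_finset_of_monotone
    · intro k k' hk p
      simp only [Finset.mem_subtype, List.mem_toFinset]
      exact S.progs_mono hk
    · rintro ⟨p, hp⟩
      simpa using S.dom_progs hp
  refine (h.comp h2).congr ?_
  intro k
  simp only [Function.comp, Zk, zterm]
  exact Finset.sum_subtype_of_mem (fun p => (2 : ℝ) ^ (-((p : List Bool).length : ℝ) / t))
    (fun p hp => S.progs_dom (List.mem_toFinset.1 hp))

theorem Zk_le (hU : IsOptimal U) {t : ℝ} (ht : 0 < t) (ht1 : t ≤ 1) (k : ℕ) :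
    S.Zk k t ≤ ∑' p, zterm U t p :=
  Monotone.ge_of_tendsto (fun _ _ h => S.Zk_mono_k h t) (S.Zk_tendsto hU ht ht1) k

theorem Zk_nonneg (k : ℕ) (t : ℝ) : 0 ≤ S.Zk k t := Finset.sum_nonneg fun _ _ => by positivity

theorem Zk_one_le (hU : IsOptimal U) (k : ℕ) : S.Zk k 1 ≤ 1 := by
  unfold Zk
  simp only [div_one]
  exact kraft U hU _ (fun p hp => S.progs_dom (List.mem_toFinset.1 hp))

theorem Zk_mono_t (k : ℕ) {s t : ℝ} (hs : 0 < s) (h : s ≤ t) : S.Zk k s ≤ S.Zk k t := by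
  unfold Zk
  refine Finset.sum_le_sum fun p _ => ?_
  apply Real.rpow_le_rpow_of_exponent_le (by norm_num)
  rw [neg_div, neg_div, neg_le_neg_iff]
  gcongr

theorem A5 (hU : IsOptimal U) {T : ℝ} (hT : 0 < T) (hT1 : T < 1) {k m : ℕ}
    (h : (∑' p, zterm U 1 p) - S.Zk k 1 ≤ (2 : ℝ) ^ (-(m : ℝ))) :
    (∑' p, zterm U T p) - S.Zk k T ≤ (2 : ℝ) ^ (-(m : ℝ) / T) := by
  set δ := (2 : ℝ) ^ (-(m : ℝ)) with hδ
  have hδ0 : 0 < δ := by positivity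
  have hlim := (S.Zk_tendsto hU hT hT1.le).sub_const (S.Zk k T)
  refine le_of_tendsto hlim ?_
  filter_upwards [eventually_ge_atTop k] with K hK
  rw [S.Zk_sub hK]
  have h1 : ∑ p ∈ (S.progs K).toFinset \ (S.progs k).toFinset, (2 : ℝ) ^ (-(p.length : ℝ)) ≤ δ := by
    have := S.Zk_sub hK 1
    simp only [div_one] at this
    rw [← this]
    have := S.Zk_le hU one_pos le_rfl K
    linarith
  have e : ∀ x : ℝ, (2 : ℝ) ^ (-x / T) = (2 : ℝ) ^ (-x) * ((2 : ℝ) ^ (-x)) ^ (1 / T - 1) := by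
    intro x
    rw [← Real.rpow_mul (by norm_num), ← Real.rpow_add (by norm_num)]
    congr 1; ring
  have hT2 : 0 ≤ 1 / T - 1 := by
    rw [sub_nonneg, le_div_iff₀ hT]; linarith
  calc _ = ∑ p ∈ (S.progs K).toFinset \ (S.progs k).toFinset, (2 : ℝ) ^ (-(p.length : ℝ)) *
          ((2 : ℝ) ^ (-(p.length : ℝ))) ^ (1 / T - 1) := Finset.sum_congr rfl fun p _ => e _
    _ ≤ ∑ p ∈ (S.progs K).toFinset \ (S.progs k).toFinset, (2 : ℝ) ^ (-(p.length : ℝ)) *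
          δ ^ (1 / T - 1) := by
        refine Finset.sum_le_sum fun p hp => ?_
        have : (2 : ℝ) ^ (-(p.length : ℝ)) ≤ δ := 
          (Finset.single_le_sum (f := fun p : List Bool => (2 : ℝ) ^ (-(p.length : ℝ))) (fun _ _ => by positivity) hp).trans h1
        gcongr
    _ ≤ δ * δ ^ (1 / T - 1) := by
        rw [← Finset.sum_mul]; gcongr
    _ = _ := by rw [e, hδ]

theorem A3 (hU : IsOptimal U) {T t0 : ℝ} (hT : 0 < T) (ht0 : T < t0) (ht1 : t0 < 1) :
    ∃ W : ℝ, 0 < W ∧ ∀ k t, T ≤ t → t ≤ t0 → S.Zk k t - S.Zk k T ≤ W * (t - T) := by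
  set δ := 1 / t0 - 1 with hδ
  have ht00 : 0 < t0 := hT.trans ht0
  have hδ0 : 0 < δ := by
    rw [hδ, sub_pos, lt_div_iff₀ ht00]; linarith
  have hlog : 0 < Real.log 2 := Real.log_pos (by norm_num)
  refine ⟨1 / (δ * T ^ 2), by positivity, ?_⟩
  intro k t htT htt
  have ht : 0 < t := by linarith
  unfold Zk
  rw [← Finset.sum_sub_distrib]
  have key : ∀ l : ℕ, (2 : ℝ) ^ (-(l : ℝ) / t) - (2 : ℝ) ^ (-(l : ℝ) / T) ≤
      (2 : ℝ) ^ (-(l : ℝ)) * (1 / (δ * T ^ 2) * (t - T)) := by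
    intro l
    set x := (l : ℝ) * (1 / T - 1 / t) * Real.log 2 with hx
    have e1 : (2 : ℝ) ^ (-(l : ℝ) / T) = (2 : ℝ) ^ (-(l : ℝ) / t) * Real.exp (-x) := by
      rw [Real.rpow_def_of_pos (by norm_num), Real.rpow_def_of_pos (by norm_num), ← Real.exp_add]
      congr 1; rw [hx]; ring
    have h1 : 1 - Real.exp (-x) ≤ x := by have := Real.add_one_le_exp (-x); linarith
    have hxle : x ≤ l * Real.log 2 * ((t - T) / T ^ 2) := by
      rw [hx]
      have : 1 / T - 1 / t ≤ (t - T) / T ^ 2 := by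
        rw [div_sub_div _ _ hT.ne' ht.ne', one_mul, mul_one]
        apply div_le_div_of_nonneg_left (by linarith) (by positivity)
        nlinarith
      calc _ = l * Real.log 2 * (1 / T - 1 / t) := by ring
        _ ≤ _ := by gcongr
    have h2 : (2 : ℝ) ^ (-(l : ℝ) / t) ≤ (2 : ℝ) ^ (-(l : ℝ)) * Real.exp (-(l * δ * Real.log 2)) := by
      rw [Real.rpow_def_of_pos (by norm_num), Real.rpow_def_of_pos (by norm_num), ← Real.exp_add]
      apply Real.exp_le_exp.2
      have : (l : ℝ) / t0 ≤ l / t := by gcongr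
      have e : -(l : ℝ) / t = -(l / t) := by ring
      have e' : (l : ℝ) * δ = l / t0 - l := by rw [hδ]; ring
      rw [e, e']
      nlinarith
    have h3 : Real.exp (-(l * δ * Real.log 2)) * (l * Real.log 2) ≤ 1 / δ := by
      rw [le_div_iff₀ hδ0, Real.exp_neg, mul_assoc, inv_mul_le_iff₀ (Real.exp_pos _)]
      have := Real.add_one_le_exp (l * δ * Real.log 2)
      linarith
    have hq : 0 ≤ (t - T) / T ^ 2 := by apply div_nonneg; linarith; positivity
    calc _ = (2 : ℝ) ^ (-(l : ℝ) / t) * (1 - Real.exp (-x)) := by rw [e1]; ring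
      _ ≤ (2 : ℝ) ^ (-(l : ℝ) / t) * (l * Real.log 2 * ((t - T) / T ^ 2)) := by
          gcongr; linarith
      _ ≤ ((2 : ℝ) ^ (-(l : ℝ)) * Real.exp (-(l * δ * Real.log 2))) * (l * Real.log 2 * ((t - T) / T ^ 2)) := by
          gcongr
      _ = (2 : ℝ) ^ (-(l : ℝ)) * ((Real.exp (-(l * δ * Real.log 2)) * (l * Real.log 2)) * ((t - T) / T ^ 2)) := by ring
      _ ≤ (2 : ℝ) ^ (-(l : ℝ)) * (1 / δ * ((t - T) / T ^ 2)) := by gcongr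
      _ = _ := by field_simp
  refine (Finset.sum_le_sum fun p _ => key p.length).trans ?_
  rw [← Finset.sum_mul]
  have := kraft U hU (S.progs k).toFinset (fun p hp => S.progs_dom (List.mem_toFinset.1 hp))
  have hnn : 0 ≤ 1 / (δ * T ^ 2) * (t - T) := mul_nonneg (by positivity) (by linarith)
  nlinarith

theorem A4 (hU : IsOptimal U) {T : ℝ} (hT : 0 < T) (hT1 : T < 1) :
    ∃ κ : ℝ, ∃ k0 : ℕ, 0 < κ ∧ ∀ k t, k0 ≤ k → T ≤ t → t ≤ 1 → κ * (t - T) ≤ S.Zk k t - S.Zk k T := by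
  have hlog : 0 < Real.log 2 := Real.log_pos (by norm_num)
  obtain ⟨p, hp⟩ := exists_prog U hU []
  have hp' : p ∈ U.domain := Part.dom_iff_mem.2 ⟨_, hp⟩
  have hl : 1 ≤ p.length := by
    cases p with
    | nil => exact absurd hp' (nil_not_dom U hU)
    | cons a l => simp
  obtain ⟨k0, hk0⟩ := S.dom_progs hp'
  refine ⟨(2 : ℝ) ^ (-(p.length : ℝ) / T) * Real.log 2, k0, by positivity, ?_⟩
  intro k t hk htT ht1
  have ht : 0 < t := by linarith
  unfold Zk
  rw [← Finset.sum_sub_distrib]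
  have hnn : ∀ q ∈ (S.progs k).toFinset, 0 ≤ (2 : ℝ) ^ (-(q.length : ℝ) / t) - (2 : ℝ) ^ (-(q.length : ℝ) / T) := by
    intro q _
    rw [sub_nonneg]
    apply Real.rpow_le_rpow_of_exponent_le (by norm_num)
    rw [neg_div, neg_div, neg_le_neg_iff]
    gcongr
  refine le_trans ?_ (Finset.single_le_sum hnn (List.mem_toFinset.2 (S.progs_mono hk hk0)))
  set x := (p.length : ℝ) * (1 / T - 1 / t) * Real.log 2 with hx
  have e1 : (2 : ℝ) ^ (-(p.length : ℝ) / t) = (2 : ℝ) ^ (-(p.length : ℝ) / T) * Real.exp x := by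
    rw [Real.rpow_def_of_pos (by norm_num), Real.rpow_def_of_pos (by norm_num), ← Real.exp_add]
    congr 1; rw [hx]; ring
  have hx1 : Real.log 2 * (t - T) ≤ x := by
    have h1 : t - T ≤ 1 / T - 1 / t := by
      rw [div_sub_div _ _ hT.ne' ht.ne', one_mul, mul_one, le_div_iff₀ (by positivity)]
      have : T * t ≤ 1 := by nlinarith
      nlinarith
    have hl' : (1 : ℝ) ≤ p.length := by exact_mod_cast hl
    rw [hx, mul_comm]
    gcongr
    nlinarith
  have h2 := Real.add_one_le_exp x
  rw [e1]
  have h3 : 0 < (2 : ℝ) ^ (-(p.length : ℝ) / T) := by positivity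
  nlinarith

theorem exists_gt (hU : IsOptimal U) {T t : ℝ} (hT : 0 < T) (hTt : T < t) (ht1 : t ≤ 1) :
    ∀ᶠ k in atTop, ∑' p, zterm U T p < S.Zk k t := by
  obtain ⟨κ, k0, hκ, h⟩ := S.A4 hU hT (hTt.trans_le ht1)
  have h1 : κ * (t - T) ≤ (∑' p, zterm U t p) - ∑' p, zterm U T p := by
    refine ge_of_tendsto ((S.Zk_tendsto hU (hT.trans hTt) ht1).sub (S.Zk_tendsto hU hT (hTt.le.trans ht1))) ?_
    filter_upwards [eventually_ge_atTop k0] with k hk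
    exact h k t hk hTt.le ht1
  have h2 : 0 < κ * (t - T) := mul_pos hκ (by linarith)
  exact (S.Zk_tendsto hU (hT.trans hTt) ht1).eventually_const_lt (by linarith)

theorem lt_of_gt (hU : IsOptimal U) {T t : ℝ} (ht : 0 < t) (hT1 : T ≤ 1) {k : ℕ}
    (h : ∑' p, zterm U T p < S.Zk k t) : T < t := by
  by_contra! hc
  have := S.Zk_mono_t k ht hc
  have := S.Zk_le hU (ht.trans_le hc) hT1 k
  linarith

theorem keyK (hU : IsOptimal U) {T : ℝ} (hT : 0 < T) (hT1 : T < 1) :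
    ∃ c : ℝ, ∀ (n k : ℕ) (t : ℝ), t ≤ T + 2 / 2 ^ n → 0 < t → ∑' p, zterm U T p < S.Zk k t →
      T * n - c ≤ H U (S.out k) := by
  obtain ⟨W, hW, hA⟩ := S.A3 hU hT (show T < (T + 1) / 2 by linarith) (by linarith)
  obtain ⟨n0, hn0⟩ : ∃ n0 : ℕ, ∀ n, n0 ≤ n → (2 : ℝ) / 2 ^ n ≤ (1 - T) / 2 := by
    have : Tendsto (fun n : ℕ => (2 : ℝ) / 2 ^ n) atTop (nhds 0) :=
      tendsto_const_nhds.div_atTop (tendsto_pow_atTop_atTop_of_one_lt (by norm_num))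
    have := this.eventually_le_const (show (0 : ℝ) < (1 - T) / 2 by linarith)
    exact eventually_atTop.1 this
  refine ⟨T * n0 + T * |Real.logb 2 (2 * W)|, ?_⟩
  intro n k t htn ht h
  have hTt := S.lt_of_gt hU ht hT1.le h
  rcases lt_or_ge n n0 with hn | hn
  · have : (n : ℝ) ≤ n0 := by exact_mod_cast hn.le
    have h1 := abs_nonneg (Real.logb 2 (2 * W))
    have h2 := Nat.cast_nonneg (α := ℝ) (H U (S.out k))
    have h3 := mul_nonneg hT.le h1
    have h4 := mul_le_mul_of_nonneg_left this hT.le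
    linarith
  · obtain ⟨p, hp, hpl⟩ := exists_min_prog U hU (S.out k)
    have hpd : p ∈ U.domain := Part.dom_iff_mem.2 ⟨_, hp⟩
    have hpn : p ∉ S.progs k := fun hc => S.mem_out hc hp rfl
    rw [← hpl]
    obtain ⟨k1, hk1⟩ := S.dom_progs hpd
    have hK : k ≤ max k k1 := le_max_left _ _
    have e1 : (2 : ℝ) ^ (-(p.length : ℝ) / T) ≤ S.Zk (max k k1) T - S.Zk k T := by
      rw [S.Zk_sub hK]
      refine Finset.single_le_sum (f := fun p : List Bool => (2 : ℝ) ^ (-(p.length : ℝ) / T)) (fun _ _ => by positivity) ?_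
      simp only [Finset.mem_sdiff, List.mem_toFinset]
      exact ⟨S.progs_mono (le_max_right _ _) hk1, hpn⟩
    have e2 := S.Zk_le hU hT hT1.le (max k k1)
    have e3 := hA k t hTt.le (by linarith [hn0 n hn])
    have e4 : (2 : ℝ) ^ (-(p.length : ℝ) / T) ≤ 2 * W / 2 ^ n := by
      have : W * (t - T) ≤ W * (2 / 2 ^ n) := by gcongr; linarith
      have e : W * (2 / 2 ^ n) = 2 * W / 2 ^ n := by ring
      linarith
    have e5 : -(p.length : ℝ) / T ≤ Real.logb 2 (2 * W) - n := by
      have := Real.logb_le_logb_of_le (by norm_num : (1 : ℝ) < 2) (by positivity) e4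
      rw [Real.logb_rpow (by norm_num) (by norm_num), Real.logb_div (by positivity) (by positivity),
        Real.logb_pow, Real.logb_self_eq_one (by norm_num), mul_one] at this
      exact this
    rw [div_le_iff₀ hT] at e5
    have := le_abs_self (Real.logb 2 (2 * W))
    have h0 : 0 ≤ T * n0 := by positivity
    nlinarith

end Stp

theorem clt {α : Type} [Primcodable α] {f g : α → ℕ} (hf : Computable f) (hg : Computable g) :
    Computable fun x => decide (f x < g x) := (PrimrecRel.decide Primrec.nat_lt).to_comp.comp hf hg

theorem cle {α : Type} [Primcodable α] {f g : α → ℕ} (hf : Computable f) (hg : Computable g) :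
    Computable fun x => decide (f x ≤ g x) := (PrimrecRel.decide Primrec.nat_le).to_comp.comp hf hg

theorem ceq {α β : Type} [Primcodable α] [Primcodable β] [DecidableEq β] {f g : α → β}
    (hf : Computable f) (hg : Computable g) :
    Computable fun x => decide (f x = g x) := (PrimrecRel.decide Primrec.eq).to_comp.comp hf hg

theorem cand {α : Type} [Primcodable α] {f g : α → Bool} (hf : Computable f) (hg : Computable g) :
    Computable fun x => f x && g x := Primrec.and.to_comp.comp hf hg

theorem cadd {α : Type} [Primcodable α] {f g : α → ℕ} (hf : Computable f) (hg : Computable g) :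
    Computable fun x => f x + g x := Primrec.nat_add.to_comp.comp hf hg

theorem cmul {α : Type} [Primcodable α] {f g : α → ℕ} (hf : Computable f) (hg : Computable g) :
    Computable fun x => f x * g x := Primrec.nat_mul.to_comp.comp hf hg

theorem csub {α : Type} [Primcodable α] {f g : α → ℕ} (hf : Computable f) (hg : Computable g) :
    Computable fun x => f x - g x := Primrec.nat_sub.to_comp.comp hf hg

theorem cpow2 {α : Type} [Primcodable α] {f : α → ℕ} (hf : Computable f) :
    Computable fun x => 2 ^ f x := primrec_pow.to_comp.comp (Computable.const 2) hf

def toBits (n v : ℕ) : List Bool := (List.range n).map fun i => decide (v / 2 ^ (n - 1 - i) % 2 = 1)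

theorem primrec_toBits : Primrec₂ toBits := by
  unfold toBits
  refine Primrec.list_map (Primrec.list_range.comp Primrec.fst) ?_
  refine (PrimrecRel.decide Primrec.eq).comp ?_ (Primrec.const 1)
  refine Primrec.nat_mod.comp (Primrec.nat_div.comp (Primrec.snd.comp Primrec.fst) ?_) (Primrec.const 2)
  refine primrec_pow.comp (Primrec.const 2) ?_
  exact Primrec.nat_sub.comp (Primrec.nat_sub.comp (Primrec.fst.comp Primrec.fst) (Primrec.const 1)) Primrec.snd

theorem ctoBits {α : Type} [Primcodable α] {f g : α → ℕ} (hf : Computable f) (hg : Computable g) :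
    Computable fun x => toBits (f x) (g x) := primrec_toBits.to_comp.comp hf hg

@[simp] theorem length_toBits (n v : ℕ) : (toBits n v).length = n := by simp [toBits]

theorem toBits_inj {n v v' : ℕ} (hv : v < 2 ^ n) (hv' : v' < 2 ^ n) (h : toBits n v = toBits n v') : v = v' := by
  apply Nat.eq_of_testBit_eq
  intro j
  rcases lt_or_ge j n with hj | hj
  · have := congrArg (fun l => l[n - 1 - j]?) h
    simp only [toBits, List.getElem?_map, List.getElem?_range (show n - 1 - j < n by omega), Option.map_some,
      Option.some.injEq] at this
    rw [show n - 1 - (n - 1 - j) = j by omega] at this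
    rw [Nat.testBit_eq_decide_div_mod_eq, Nat.testBit_eq_decide_div_mod_eq, this]
  · have h2 : 2 ^ n ≤ 2 ^ j := Nat.pow_le_pow_right (by norm_num) hj
    rw [Nat.testBit_lt_two_pow (by omega), Nat.testBit_lt_two_pow (by omega)]

theorem bits_eq {T : ℝ} (hT : 0 < T) (hT1 : T < 1) (n : ℕ) : bits T n = toBits n ⌊T * 2 ^ n⌋₊ := by
  unfold bits toBits
  apply List.map_congr_left
  intro i hi
  have hi : i < n := by simpa using hi
  unfold binDigit
  rw [Int.fract_eq_self.2 ⟨hT.le, hT1⟩]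
  have h1 : ⌊T * 2 ^ n⌋₊ / 2 ^ (n - 1 - i) = ⌊T * 2 ^ (i + 1)⌋₊ := by
    have e := Nat.floor_div_natCast (T * 2 ^ n) (2 ^ (n - 1 - i))
    rw [← e]
    congr 1
    rw [show n = (i + 1) + (n - 1 - i) by omega, pow_add, show i + 1 + (n - 1 - i) - 1 - i = n - 1 - i by omega]
    push_cast
    field_simp
  rw [h1, ← Int.natCast_floor_eq_floor (by positivity)]
  congr 1
  apply propext
  norm_cast

theorem floor_lt {T : ℝ} (hT : 0 < T) (hT1 : T < 1) (n : ℕ) : ⌊T * 2 ^ n⌋₊ < 2 ^ n := by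
  rw [Nat.floor_lt (by positivity)]
  push_cast
  have : (0 : ℝ) < 2 ^ n := by positivity
  nlinarith

theorem floor_t {T : ℝ} (hT : 0 < T) (n : ℕ) :
    T < ((⌊T * 2 ^ n⌋₊ + 1 : ℕ) : ℝ) / (2 ^ n : ℕ) ∧ ((⌊T * 2 ^ n⌋₊ + 1 : ℕ) : ℝ) / (2 ^ n : ℕ) ≤ T + 1 / 2 ^ n := by
  have h : (0 : ℝ) < 2 ^ n := by positivity
  push_cast
  constructor
  · rw [lt_div_iff₀ h]; exact Nat.lt_floor_add_one _
  · rw [div_le_iff₀ h, add_mul]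
    have := Nat.floor_le (show 0 ≤ T * 2 ^ n by positivity)
    have e : 1 / (2 : ℝ) ^ n * 2 ^ n = 1 := by field_simp
    linarith

theorem ev_pow {δ : ℝ} (hδ : 0 < δ) (C : ℝ) : ∀ᶠ M : ℕ in atTop, C < 2 ^ M * δ :=
  ((tendsto_pow_atTop_atTop_of_one_lt (by norm_num : (1 : ℝ) < 2)).atTop_mul_const hδ).eventually_gt_atTop C

theorem rep_prefix {k k' : ℕ} {A B : List Bool}
    (h : List.replicate k true ++ false :: A <+: List.replicate k' true ++ false :: B) : k = k' ∧ A <+: B := by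
  induction k generalizing k' with
  | zero =>
    cases k' with
    | zero => simpa using h
    | succ k' => simp [List.replicate_succ] at h
  | succ k ih =>
    cases k' with
    | zero => simp [List.replicate_succ] at h
    | succ k' =>
      simp only [List.replicate_succ, List.cons_append, List.cons_prefix_cons, true_and] at h
      obtain ⟨h1, h2⟩ := ih h
      exact ⟨by omega, h2⟩

theorem crep {α : Type} [Primcodable α] {f : α → ℕ} {g : α → List Bool} (hf : Computable f) (hg : Computable g) :
    Computable fun x => List.replicate (f x) true ++ false :: g x :=
  Primrec.list_append.to_comp.comp (primrec_replicate.to_comp.comp hf)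
    (Primrec.list_cons.to_comp.comp (Computable.const false) hg)

namespace Stp
variable {U : Computer} (S : Stp U)

def chk (F : ℕ → ℕ) (k a b M : ℕ) : Bool := decide (0 < a) && decide (F M + 2 < S.zs k a b M)

theorem czs {α : Type} [Primcodable α] {k a b M : α → ℕ} (hk : Computable k) (ha : Computable a)
    (hb : Computable b) (hM : Computable M) : Computable fun x => S.zs (k x) (a x) (b x) (M x) := by
  have h : Primrec fun y : ℕ × ℕ × ℕ × ℕ => S.zs y.1 y.2.1 y.2.2.1 y.2.2.2 :=
    S.primrec_zs Primrec.fst (Primrec.fst.comp Primrec.snd) (Primrec.fst.comp (Primrec.snd.comp Primrec.snd))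
      (Primrec.snd.comp (Primrec.snd.comp Primrec.snd))
  exact h.to_comp.comp (hk.pair (ha.pair (hb.pair hM)))

theorem cchk {F : ℕ → ℕ} (hF : Computable F) {α : Type} [Primcodable α] {k a b M : α → ℕ} (hk : Computable k)
    (ha : Computable a) (hb : Computable b) (hM : Computable M) :
    Computable fun x => S.chk F (k x) (a x) (b x) (M x) := by
  unfold chk
  exact cand (clt (Computable.const 0) ha) (clt (cadd (hF.comp hM) (Computable.const 2)) (S.czs hk ha hb hM))

theorem chk_sound {F : ℕ → ℕ} {Z : ℝ} (hF : ∀ M, |Z * 2 ^ M - F M| ≤ 2) {k a b M : ℕ} (h : S.chk F k a b M = true) : 0 < a ∧ Z < S.Zk k ((a : ℝ) / b) := by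
  simp only [chk, Bool.and_eq_true, decide_eq_true_eq] at h
  refine ⟨h.1, ?_⟩
  have h1 := S.zs_le (k := k) (b := b) (M := M) h.1
  have h2 := abs_le.1 (hF M)
  have h3 : (F M : ℝ) + 2 < S.zs k a b M := by exact_mod_cast h.2
  have h4 : (0 : ℝ) < 2 ^ M := by positivity
  by_contra! hc
  nlinarith

theorem chk_complete {F : ℕ → ℕ} {Z : ℝ} (hF : ∀ M, |Z * 2 ^ M - F M| ≤ 2) {k a b : ℕ} (ha : 0 < a) (h : Z < S.Zk k ((a : ℝ) / b)) :
    ∀ᶠ M in atTop, S.chk F k a b M = true := by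
  filter_upwards [ev_pow (sub_pos.2 h) ((S.progs k).length + 4)] with M hM
  simp only [chk, Bool.and_eq_true, decide_eq_true_eq]
  refine ⟨ha, ?_⟩
  have h1 := S.le_zs (k := k) (b := b) (M := M) ha
  have h2 := abs_le.1 (hF M)
  have : (F M : ℝ) + 2 < S.zs k a b M := by nlinarith
  exact_mod_cast this

def chkU (F : ℕ → ℕ) (D k a n M : ℕ) : Bool :=
  decide ((S.zs k a (2 ^ n) M + (S.progs k).length + 2) * 2 ^ n ≤ 2 ^ n * F M + D * 2 ^ M)

theorem cchkU {F : ℕ → ℕ} (hF : Computable F) (D : ℕ) {α : Type} [Primcodable α] {k a n M : α → ℕ} (hk : Computable k)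
    (ha : Computable a) (hn : Computable n) (hM : Computable M) :
    Computable fun x => S.chkU F D (k x) (a x) (n x) (M x) := by
  unfold chkU
  exact cle (cmul (cadd (cadd (S.czs hk ha (cpow2 hn) hM)
    (Primrec.list_length.to_comp.comp (S.primrec_progs.to_comp.comp hk))) (Computable.const 2)) (cpow2 hn))
    (cadd (cmul (cpow2 hn) (hF.comp hM)) (cmul (Computable.const D) (cpow2 hM)))

theorem chkU_sound {F : ℕ → ℕ} {Z : ℝ} (hF : ∀ M, |Z * 2 ^ M - F M| ≤ 2) {D k a n M : ℕ} (ha : 0 < a) (h : S.chkU F D k a n M = true) :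
    S.Zk k ((a : ℝ) / (2 ^ n : ℕ)) ≤ Z + D / 2 ^ n := by
  simp only [chkU, decide_eq_true_eq] at h
  have h1 := S.le_zs (k := k) (b := 2 ^ n) (M := M) ha
  have h2 := abs_le.1 (hF M)
  have h3 : ((S.zs k a (2 ^ n) M : ℝ) + (S.progs k).length + 2) * 2 ^ n ≤ 2 ^ n * F M + D * 2 ^ M := by
    exact_mod_cast h
  have h4 : (0 : ℝ) < 2 ^ M := by positivity
  have h5 : (0 : ℝ) < 2 ^ n := by positivity
  set y := S.Zk k ((a : ℝ) / (2 ^ n : ℕ))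
  have h6 : (2 ^ M * y + 2) * 2 ^ n ≤ 2 ^ n * (Z * 2 ^ M + 2) + D * 2 ^ M := by nlinarith
  have h7 : 2 ^ M * (y * 2 ^ n) ≤ 2 ^ M * (Z * 2 ^ n + D) := by nlinarith
  have h8 := le_of_mul_le_mul_left h7 h4
  have e : Z + D / 2 ^ n = (Z * 2 ^ n + D) / 2 ^ n := by field_simp
  rw [e, le_div_iff₀ h5]
  exact h8

theorem chkU_complete {F : ℕ → ℕ} {Z : ℝ} (hF : ∀ M, |Z * 2 ^ M - F M| ≤ 2) {D k a n : ℕ} (ha : 0 < a) (h : S.Zk k ((a : ℝ) / (2 ^ n : ℕ)) < Z + D / 2 ^ n) :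
    ∀ᶠ M in atTop, S.chkU F D k a n M = true := by
  filter_upwards [ev_pow (sub_pos.2 h) ((S.progs k).length + 4)] with M hM
  simp only [chkU, decide_eq_true_eq]
  have h1 := S.zs_le (k := k) (b := 2 ^ n) (M := M) ha
  have h2 := abs_le.1 (hF M)
  have h4 : (0 : ℝ) < 2 ^ M := by positivity
  have h5 : (0 : ℝ) < 2 ^ n := by positivity
  set y := S.Zk k ((a : ℝ) / (2 ^ n : ℕ))
  have h6 : (S.zs k a (2 ^ n) M : ℝ) + (S.progs k).length + 2 ≤ F M + D / 2 ^ n * 2 ^ M := by nlinarith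
  have : ((S.zs k a (2 ^ n) M : ℝ) + (S.progs k).length + 2) * 2 ^ n ≤ 2 ^ n * F M + D * 2 ^ M := by
    calc _ ≤ ((F M : ℝ) + D / 2 ^ n * 2 ^ M) * 2 ^ n := by gcongr
      _ = 2 ^ n * F M + D * 2 ^ M := by field_simp
  exact_mod_cast this

def chkO (v m k M : ℕ) : Bool := decide (v * 2 ^ M ≤ 2 ^ m * S.zs k 1 1 M)

theorem cchkO {α : Type} [Primcodable α] {v m k M : α → ℕ} (hv : Computable v) (hm : Computable m)
    (hk : Computable k) (hM : Computable M) : Computable fun x => S.chkO (v x) (m x) (k x) (M x) := by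
  unfold chkO
  exact cle (cmul hv (cpow2 hM)) (cmul (cpow2 hm) (S.czs hk (Computable.const 1) (Computable.const 1) hM))

theorem chkO_sound {v m k M : ℕ} (h : S.chkO v m k M = true) : (v : ℝ) ≤ 2 ^ m * S.Zk k 1 := by
  simp only [chkO, decide_eq_true_eq] at h
  have h1 := S.zs_le (k := k) (a := 1) (b := 1) (M := M) one_pos
  have h3 : (v : ℝ) * 2 ^ M ≤ 2 ^ m * S.zs k 1 1 M := by exact_mod_cast h
  have h4 : (0 : ℝ) < 2 ^ M := by positivity
  simp only [Nat.cast_one, div_one] at h1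
  refine le_of_mul_le_mul_right (h3.trans ?_) h4
  calc (2 : ℝ) ^ m * S.zs k 1 1 M ≤ 2 ^ m * (2 ^ M * S.Zk k 1) := by gcongr
    _ = _ := by ring

theorem chkO_complete {v m k : ℕ} (h : (v : ℝ) < 2 ^ m * S.Zk k 1) : ∀ᶠ M in atTop, S.chkO v m k M = true := by
  filter_upwards [ev_pow (sub_pos.2 h) (2 ^ m * (S.progs k).length)] with M hM
  simp only [chkO, decide_eq_true_eq]
  have h1 := S.le_zs (k := k) (a := 1) (b := 1) (M := M) one_pos
  simp only [Nat.cast_one, div_one] at h1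
  have : (v : ℝ) * 2 ^ M ≤ 2 ^ m * S.zs k 1 1 M := by
    have := mul_le_mul_of_nonneg_left h1 (show (0 : ℝ) ≤ 2 ^ m by positivity)
    nlinarith
  exact_mod_cast this

end Stp

theorem citer {σ α : Type} [Primcodable σ] [Primcodable α] (step : σ → Option α → σ) (hs : Computable₂ step) (s0 : σ) :
    ∃ g : ℕ → σ, Computable g ∧ g 0 = s0 ∧ (∀ i, ∃ o, g (i + 1) = step (g i) o) ∧
      ∀ a, ∃ i, g (i + 1) = step (g i) (some a) := by
  have h : Computable₂ fun (_ : ℕ) (y : ℕ × σ) => step y.2 (Encodable.decode y.1) :=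
    hs.comp (Computable.snd.comp Computable.snd) (Computable.decode.comp (Computable.fst.comp Computable.snd))
  refine ⟨fun i : ℕ => (Nat.rec s0 (fun i cur => step cur (Encodable.decode i)) i : σ),
    Computable.nat_rec (f := fun i : ℕ => i) Computable.id (Computable.const s0) h, rfl, fun i => ⟨_, rfl⟩, fun a =>
    ⟨Encodable.encode a, ?_⟩⟩
  change step _ (Encodable.decode (Encodable.encode a)) = _
  rw [Encodable.encodek]

namespace Stp
variable {U : Computer} (S : Stp U)

theorem exists_chk (hU : IsOptimal U) {T : ℝ} (hT : 0 < T) {F : ℕ → ℕ}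
    (hF : ∀ M, |(∑' p, zterm U T p) * 2 ^ M - F M| ≤ 2) {a b : ℕ} (ha : 0 < a)
    (h : T < (a : ℝ) / b) (h1 : (a : ℝ) / b ≤ 1) : ∃ k M, S.chk F k a b M = true := by
  obtain ⟨k, hk⟩ := (S.exists_gt hU hT h h1).exists
  obtain ⟨M, hM⟩ := (S.chk_complete hF ha hk).exists
  exact ⟨k, M, hM⟩

theorem weakly {U : Computer} (S : Stp U) (hU : IsOptimal U) {T : ℝ} (hT : 0 < T) (hT1 : T < 1) {F : ℕ → ℕ} (hFc : Computable F)
    (hF : ∀ M, |(∑' p, zterm U T p) * 2 ^ M - F M| ≤ 2) : WeaklyChaitinRandom U T T := by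
  let R : List Bool → (ℕ × ℕ × ℕ × ℕ × ℕ) → Bool := fun p x =>
    decide (S.st x.1 p = some (toBits x.2.1 x.2.2.1)) && (decide (x.2.2.1 < 2 ^ x.2.1) &&
      S.chk F x.2.2.2.1 (x.2.2.1 + 1) (2 ^ x.2.1) x.2.2.2.2)
  have hR : Computable₂ R := by
    have x1 : Computable fun y : List Bool × (ℕ × ℕ × ℕ × ℕ × ℕ) => y.2.1 := Computable.fst.comp Computable.snd
    have r1 : Computable fun y : List Bool × (ℕ × ℕ × ℕ × ℕ × ℕ) => y.2.2 := Computable.snd.comp Computable.snd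
    have x2 := Computable.fst.comp r1
    have r2 := Computable.snd.comp r1
    have x3 := Computable.fst.comp r2
    have r3 := Computable.snd.comp r2
    have x4 := Computable.fst.comp r3
    have x5 := Computable.snd.comp r3
    exact cand (ceq (S.prim.to_comp.comp x1 Computable.fst) (Computable.option_some.comp (ctoBits x2 x3)))
      (cand (clt x3 (cpow2 x2)) (S.cchk hFc x4 (cadd x3 (Computable.const 1)) (cpow2 x2) x5))
  have hg : Computable fun x : ℕ × ℕ × ℕ × ℕ × ℕ => S.out x.2.2.2.1 :=
    S.primrec_out.to_comp.comp (Computable.fst.comp (Computable.snd.comp (Computable.snd.comp Computable.snd)))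
  obtain ⟨d, hd⟩ := machine U hU R hR _ hg (by
    intro p q x y hp hq h
    simp only [R, Bool.and_eq_true, decide_eq_true_eq] at hp hq
    exact U.prefixFree _ (Part.dom_iff_mem.2 ⟨_, (S.spec _ _).2 ⟨_, hp.1⟩⟩) _
      (Part.dom_iff_mem.2 ⟨_, (S.spec _ _).2 ⟨_, hq.1⟩⟩) h)
  obtain ⟨c, hc⟩ := S.keyK hU hT hT1
  refine ⟨c + d, fun n _ => ?_⟩
  obtain ⟨p, hp, hpl⟩ := exists_min_prog U hU (bits T n)
  rw [bits_eq hT hT1] at hp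
  set v := ⌊T * 2 ^ n⌋₊ with hv
  obtain ⟨j, hj⟩ := (S.spec _ _).1 hp
  have hvlt := floor_lt hT hT1 n
  have hft := floor_t hT n
  have hle1 : ((v + 1 : ℕ) : ℝ) / (2 ^ n : ℕ) ≤ 1 := by
    rw [div_le_one (by positivity)]; exact Nat.cast_le.2 hvlt
  obtain ⟨k, M, hkM⟩ := S.exists_chk hU hT hF (Nat.succ_pos v) hft.1 hle1
  obtain ⟨x, hx, hxH⟩ := hd p (j, n, v, k, M) (by
    simp only [R, Bool.and_eq_true, decide_eq_true_eq]; exact ⟨hj, hvlt, hkM⟩)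
  simp only [R, Bool.and_eq_true, decide_eq_true_eq] at hx
  obtain ⟨j', n', v', k', M'⟩ := x
  obtain ⟨h1, h2, h3⟩ := hx
  have e1 : toBits n' v' = toBits n v := Part.mem_unique ((S.spec _ _).2 ⟨_, h1⟩) hp
  have e2 : n' = n := by simpa using congrArg List.length e1
  subst e2
  have e3 : v' = v := toBits_inj h2 hvlt e1
  subst e3
  have h4 := S.chk_sound hF h3
  have h5 := hc n' k' _ (hft.2.trans (by gcongr; norm_num)) (hT.trans hft.1) h4.2
  have h6 : (H U (S.out k') : ℝ) ≤ H U (bits T n') + d := by rw [← hpl]; exact_mod_cast hxH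
  linarith

theorem notleft {U : Computer} (S : Stp U) (hU : IsOptimal U) {T : ℝ} (hT : 0 < T) (hT1 : T < 1) {F : ℕ → ℕ} (hFc : Computable F)
    (hF : ∀ M, |(∑' p, zterm U T p) * 2 ^ M - F M| ≤ 2) : ¬ LeftComputable T := by
  rintro ⟨g, hg, hgT, hgl⟩
  obtain ⟨J, hJ⟩ := exists_nat_gt (2 / T)
  have hJ' : 2 ≤ T * J := by rw [div_lt_iff₀ hT] at hJ; linarith
  let R : List Bool → (ℕ × ℕ × ℕ × ℕ × ℕ) → Bool := fun p x =>
    decide (p = List.replicate x.1 true ++ false :: []) && (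
      S.chk F x.2.1 x.2.2.1 (2 ^ (J * x.1)) x.2.2.2.1 &&
      decide (x.2.2.1 * (g x.2.2.2.2).den ≤ (-(g x.2.2.2.2).num).toNat * 2 ^ (J * x.1) + 2 * (g x.2.2.2.2).den))
  have hR : Computable₂ R := by
    have x1 : Computable fun y : List Bool × (ℕ × ℕ × ℕ × ℕ × ℕ) => y.2.1 := Computable.fst.comp Computable.snd
    have r1 : Computable fun y : List Bool × (ℕ × ℕ × ℕ × ℕ × ℕ) => y.2.2 := Computable.snd.comp Computable.snd
    have x2 := Computable.fst.comp r1
    have r2 := Computable.snd.comp r1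
    have x3 := Computable.fst.comp r2
    have r3 := Computable.snd.comp r2
    have x4 := Computable.fst.comp r3
    have x5 := Computable.snd.comp r3
    have hn := cpow2 (cmul (Computable.const J) x1)
    have hden := computable_den.comp (hg.comp x5)
    have hnum := computable_neg_num.comp (hg.comp x5)
    exact cand (ceq Computable.fst (crep x1 (Computable.const [])))
      (cand (S.cchk hFc x2 x3 hn x4) (cle (cmul x3 hden)
        (cadd (cmul hnum hn) (cmul (Computable.const 2) hden))))
  have hout : Computable fun x : ℕ × ℕ × ℕ × ℕ × ℕ => S.out x.2.1 :=
    S.primrec_out.to_comp.comp (Computable.fst.comp Computable.snd)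
  obtain ⟨d, hd⟩ := machine U hU R hR _ hout (by
    intro p q x y hp hq h
    simp only [R, Bool.and_eq_true, decide_eq_true_eq] at hp hq
    rw [hp.1, hq.1] at h
    rw [hp.1, hq.1, (rep_prefix h).1])
  obtain ⟨c, hc⟩ := S.keyK hU hT hT1
  have hpos : ∀ m, ((-(g m).num).toNat : ℝ) / (g m).den ≤ T ∧ -(g m : ℝ) ≤ ((-(g m).num).toNat : ℝ) / (g m).den := by
    intro m
    have hden : (0 : ℝ) < (g m).den := by exact_mod_cast (g m).den_pos
    have e : -(g m : ℝ) = ((-(g m).num : ℤ) : ℝ) / (g m).den := by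
      nth_rewrite 1 [Rat.cast_def]; push_cast; ring
    rcases le_total 0 (-(g m).num) with h | h
    · have e2 : ((-(g m).num).toNat : ℝ) = ((-(g m).num : ℤ) : ℝ) := by
        exact_mod_cast Int.toNat_of_nonneg h
      rw [e2, ← e]
      exact ⟨by linarith [hgT m], le_rfl⟩
    · rw [Int.toNat_eq_zero.2 h, e]
      simp only [Nat.cast_zero, zero_div]
      refine ⟨hT.le, div_nonpos_of_nonpos_of_nonneg (by exact_mod_cast h) hden.le⟩
  have main : ∀ i : ℕ, T * (J * i : ℕ) - c ≤ i + 1 + d := by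
    intro i
    set n := J * i with hn
    have hN : (0 : ℝ) < 2 ^ n := by positivity
    set v := ⌊T * 2 ^ n⌋₊ with hv
    have hvlt := floor_lt hT hT1 n
    have hft := floor_t hT n
    have hle1 : ((v + 1 : ℕ) : ℝ) / (2 ^ n : ℕ) ≤ 1 := by
      rw [div_le_one (by positivity)]; exact Nat.cast_le.2 hvlt
    obtain ⟨k, M, hkM⟩ := S.exists_chk hU hT hF (Nat.succ_pos v) hft.1 hle1
    obtain ⟨m, hm⟩ := (hgl.eventually_lt_const (show -T < -T + 1 / 2 ^ n by
      have : (0 : ℝ) < 1 / 2 ^ n := by positivity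
      linarith)).exists
    have hden : (0 : ℝ) < (g m).den := by exact_mod_cast (g m).den_pos
    obtain ⟨x, hx, hxH⟩ := hd (List.replicate i true ++ false :: []) (i, k, v + 1, M, m) (by
      simp only [R, Bool.and_eq_true, decide_eq_true_eq]
      refine ⟨trivial, hkM, ?_⟩
      have h1 := (hpos m).2
      rw [le_div_iff₀ hden] at h1
      have h2 : ((v + 1 : ℕ) : ℝ) ≤ T * 2 ^ n + 1 := by
        push_cast
        have := Nat.floor_le (show 0 ≤ T * 2 ^ n by positivity)
        linarith
      have h3 : T * 2 ^ n ≤ -(g m : ℝ) * 2 ^ n + 1 := by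
        have : T ≤ -(g m : ℝ) + 1 / 2 ^ n := by linarith
        calc T * 2 ^ n ≤ (-(g m : ℝ) + 1 / 2 ^ n) * 2 ^ n := by gcongr
          _ = _ := by field_simp
      have h4 : ((v + 1 : ℕ) : ℝ) * (g m).den ≤ (-(g m).num).toNat * 2 ^ n + 2 * (g m).den := by
        calc ((v + 1 : ℕ) : ℝ) * (g m).den ≤ (-(g m : ℝ) * 2 ^ n + 2) * (g m).den := by gcongr; linarith
          _ = (-(g m : ℝ) * (g m).den) * 2 ^ n + 2 * (g m).den := by ring
          _ ≤ _ := by gcongr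
      exact_mod_cast h4)
    simp only [R, Bool.and_eq_true, decide_eq_true_eq] at hx
    obtain ⟨i', k', a', M', m'⟩ := x
    obtain ⟨h1, h2, h3⟩ := hx
    have e1 : i = i' := (rep_prefix ⟨[], by rw [List.append_nil]; exact h1⟩).1
    subst e1
    simp only at h2 h3 hxH
    have h4 := S.chk_sound hF h2
    have hden' : (0 : ℝ) < (g m').den := by exact_mod_cast (g m').den_pos
    have h5 : (a' : ℝ) * (g m').den ≤ (-(g m').num).toNat * 2 ^ n + 2 * (g m').den := by exact_mod_cast h3
    have h6 : (a' : ℝ) / (2 ^ n : ℕ) ≤ T + 2 / 2 ^ n := by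
      push_cast
      rw [div_le_iff₀ hN]
      have h7 := (hpos m').1
      rw [div_le_iff₀ hden'] at h7
      have e : (T + 2 / 2 ^ n) * 2 ^ n = T * 2 ^ n + 2 := by field_simp
      rw [e]
      refine le_of_mul_le_mul_right (h5.trans ?_) hden'
      nlinarith
    have h8 := hc n k' _ h6 (by have := h4.1; positivity) h4.2
    have h9 : (H U (S.out k') : ℝ) ≤ i + 1 + d := by
      have : H U (S.out k') ≤ i + 1 + d := by simpa using hxH
      exact_mod_cast this
    linarith
  obtain ⟨i, hi⟩ := exists_nat_gt (c + 1 + d)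
  have := main i
  push_cast at this
  nlinarith [Nat.cast_nonneg (α := ℝ) i]

theorem right {U : Computer} (S : Stp U) (hU : IsOptimal U) {T : ℝ} (hT : 0 < T) (hT1 : T < 1) {F : ℕ → ℕ} (hFc : Computable F)
    (hF : ∀ M, |(∑' p, zterm U T p) * 2 ^ M - F M| ≤ 2) : RightComputable T := by
  obtain ⟨step, hstep, st0, st1⟩ : ∃ step : ℚ → Option (ℚ × ℕ × ℕ) → ℚ, Computable₂ step ∧ (∀ cur, step cur none = cur) ∧
      ∀ cur q k M, step cur (some (q, k, M)) = bif (S.chk F k q.num.toNat q.den M &&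
      decide (q.num.toNat * cur.den < cur.num.toNat * q.den)) then q else cur := by
    refine ⟨fun cur o => 
      (o.bind fun x => bif (S.chk F x.2.1 x.1.num.toNat x.1.den x.2.2 &&
      decide (x.1.num.toNat * cur.den < cur.num.toNat * x.1.den)) then some x.1 else none).getD cur, ?_, fun cur => rfl,
      fun cur q k M => ?_⟩
    swap
    · beta_reduce
      rw [Option.bind_some]
      cases (S.chk F k q.num.toNat q.den M && decide (q.num.toNat * cur.den < cur.num.toNat * q.den)) <;> rfl
    refine Computable.option_getD (Computable.option_bind Computable.snd ?_) Computable.fst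
    have cur : Computable fun y : (ℚ × Option (ℚ × ℕ × ℕ)) × (ℚ × ℕ × ℕ) => y.1.1 := Computable.fst.comp Computable.fst
    have q : Computable fun y : (ℚ × Option (ℚ × ℕ × ℕ)) × (ℚ × ℕ × ℕ) => y.2.1 := Computable.fst.comp Computable.snd
    have k : Computable fun y : (ℚ × Option (ℚ × ℕ × ℕ)) × (ℚ × ℕ × ℕ) => y.2.2.1 :=
      Computable.fst.comp (Computable.snd.comp Computable.snd)
    have M : Computable fun y : (ℚ × Option (ℚ × ℕ × ℕ)) × (ℚ × ℕ × ℕ) => y.2.2.2 :=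
      Computable.snd.comp (Computable.snd.comp Computable.snd)
    have qn := computable_num.comp q
    have qd := computable_den.comp q
    exact Computable.cond (cand (S.cchk hFc k qn qd M)
      (clt (cmul qn (computable_den.comp cur)) (cmul (computable_num.comp cur) qd)))
      (Computable.option_some.comp q) (Computable.const none)
  obtain ⟨g, hg, g0, gs, ga⟩ := citer step hstep 1
  have cast_eq : ∀ q : ℚ, 0 < q → (q : ℝ) = (q.num.toNat : ℝ) / q.den := by
    intro q hq
    nth_rewrite 1 [Rat.cast_def]
    congr 1
    exact_mod_cast (Int.toNat_of_nonneg (Rat.num_pos.2 hq).le).symm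
  have lt_iff : ∀ q r : ℚ, 0 < q → 0 < r → (q.num.toNat * r.den < r.num.toNat * q.den ↔ q < r) := by
    intro q r hq hr
    have : (q < r) ↔ ((q : ℝ) < r) := by norm_cast
    rw [this, cast_eq q hq, cast_eq r hr, div_lt_div_iff₀ (by exact_mod_cast q.den_pos) (by exact_mod_cast r.den_pos)]
    norm_cast
  have chkT : ∀ (q : ℚ) k M, S.chk F k q.num.toNat q.den M = true → 0 < q ∧ T < q := by
    intro q k M h
    have h1 := S.chk_sound hF h
    have hq : 0 < q := by rw [← Rat.num_pos]; have := h1.1; omega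
    refine ⟨hq, ?_⟩
    rw [← cast_eq q hq] at h1
    exact S.lt_of_gt hU (by exact_mod_cast hq) hT1.le h1.2
  have step_spec : ∀ (cur : ℚ) o, 0 < cur → T ≤ cur → (0 < step cur o ∧ T ≤ step cur o ∧ step cur o ≤ cur) := by
    intro cur o hc hTc
    cases o with
    | none => rw [st0]; exact ⟨hc, hTc, le_rfl⟩
    | some x =>
      obtain ⟨q, k, M⟩ := x
      cases hb : (S.chk F k q.num.toNat q.den M &&
          decide (q.num.toNat * cur.den < cur.num.toNat * q.den))
      · have : step cur (some (q, k, M)) = cur := by rw [st1, hb]; rfl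
        rw [this]; exact ⟨hc, hTc, le_rfl⟩
      · have : step cur (some (q, k, M)) = q := by rw [st1, hb]; rfl
        rw [this]
        simp only [Bool.and_eq_true, decide_eq_true_eq] at hb
        have h1 := chkT q k M hb.1
        exact ⟨h1.1, h1.2.le, ((lt_iff q cur h1.1 hc).1 hb.2).le⟩
  have inv : ∀ i, 0 < g i ∧ T ≤ g i := by
    intro i
    induction i with
    | zero => exact ⟨by rw [g0]; exact one_pos, by simp [g0, hT1.le]⟩
    | succ i ih => obtain ⟨o, ho⟩ := gs i; rw [ho]; have := step_spec (g i) o ih.1 ih.2; exact ⟨this.1, this.2.1⟩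
  have anti : Antitone g := antitone_nat_of_succ_le fun i => by
    obtain ⟨o, ho⟩ := gs i; rw [ho]; exact (step_spec _ _ (inv i).1 (inv i).2).2.2
  refine ⟨g, hg, fun i => (inv i).2, ?_⟩
  refine tendsto_order.2 ⟨fun a ha => Eventually.of_forall fun i => ha.trans_le (inv i).2, ?_⟩
  intro b hb
  obtain ⟨q, hq1, hq2⟩ := exists_rat_btwn (show T < min b 1 from lt_min hb hT1)
  have hq0 : 0 < q := by have := hT.trans hq1; exact_mod_cast this
  rw [cast_eq q hq0] at hq1
  obtain ⟨k, M, hkM⟩ := S.exists_chk hU hT hF (a := q.num.toNat) (b := q.den)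
    (by have := Rat.num_pos.2 hq0; omega) hq1 (by rw [← cast_eq q hq0]; exact (hq2.trans_le (min_le_right _ _)).le)
  obtain ⟨i, hi⟩ := ga (q, k, M)
  have hle : g (i + 1) ≤ q := by
    rw [hi]
    have h0 := inv i
    set cur := g i
    by_cases hlt : q < cur
    · have hb : (S.chk F k q.num.toNat q.den M &&
          decide (q.num.toNat * cur.den < cur.num.toNat * q.den)) = true := by
        simp only [Bool.and_eq_true, decide_eq_true_eq]
        exact ⟨hkM, (lt_iff q cur hq0 h0.1).2 hlt⟩
      have : step cur (some (q, k, M)) = q := by rw [st1, hb]; rfl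
      exact this.le
    · exact (step_spec cur _ h0.1 h0.2).2.2.trans (not_lt.1 hlt)
  filter_upwards [eventually_ge_atTop (i + 1)] with j hj
  have h1 : ((g j : ℚ) : ℝ) ≤ q := by exact_mod_cast (anti hj).trans hle
  exact h1.trans_lt (hq2.trans_le (min_le_left _ _))

end Stp

def ncode (n a : ℕ) : List Bool := List.replicate n true ++ false :: List.replicate a true

theorem cncode {α : Type} [Primcodable α] {f g : α → ℕ} (hf : Computable f) (hg : Computable g) :
    Computable fun x => ncode (f x) (g x) := crep hf (primrec_replicate.to_comp.comp hg)

theorem ncode_inj {n a n' a' : ℕ} (h : ncode n a = ncode n' a') : n = n' ∧ a = a' := by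
  have h1 := (rep_prefix (k := n) (k' := n') ⟨[], by rw [List.append_nil]; exact h⟩).1
  have h2 := congrArg List.length h
  simp [ncode] at h2
  omega

theorem correction {U : Computer} (S : Stp U) (hU : IsOptimal U) :
    ∃ d : ℕ, ∀ n a e, H U (toBits n (a - e)) ≤ H U (ncode n a) + e + d := by
  let R : List Bool → (ℕ × List Bool × ℕ × ℕ × ℕ) → Bool := fun p x =>
    decide (p = List.replicate x.1 true ++ false :: x.2.1) &&
      decide (S.st x.2.2.1 x.2.1 = some (ncode x.2.2.2.1 x.2.2.2.2))
  have hR : Computable₂ R := by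
    have x1 : Computable fun y : List Bool × (ℕ × List Bool × ℕ × ℕ × ℕ) => y.2.1 := Computable.fst.comp Computable.snd
    have r1 : Computable fun y : List Bool × (ℕ × List Bool × ℕ × ℕ × ℕ) => y.2.2 := Computable.snd.comp Computable.snd
    have x2 := Computable.fst.comp r1
    have r2 := Computable.snd.comp r1
    have x3 := Computable.fst.comp r2
    have r3 := Computable.snd.comp r2
    have x4 := Computable.fst.comp r3
    have x5 := Computable.snd.comp r3
    exact cand (ceq Computable.fst (crep x1 x2))
      (ceq (S.prim.to_comp.comp x3 x2) (Computable.option_some.comp (cncode x4 x5)))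
  have hg : Computable fun x : ℕ × List Bool × ℕ × ℕ × ℕ => toBits x.2.2.2.1 (x.2.2.2.2 - x.1) := by
    have r3 : Computable fun x : ℕ × List Bool × ℕ × ℕ × ℕ => x.2.2.2 :=
      Computable.snd.comp (Computable.snd.comp Computable.snd)
    exact ctoBits (Computable.fst.comp r3) (csub (Computable.snd.comp r3) Computable.fst)
  obtain ⟨d, hd⟩ := machine U hU R hR _ hg (by
    intro p q x y hp hq h
    simp only [R, Bool.and_eq_true, decide_eq_true_eq] at hp hq
    rw [hp.1, hq.1] at h
    obtain ⟨h1, h2⟩ := rep_prefix h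
    have := U.prefixFree _ (Part.dom_iff_mem.2 ⟨_, (S.spec _ _).2 ⟨_, hp.2⟩⟩) _
      (Part.dom_iff_mem.2 ⟨_, (S.spec _ _).2 ⟨_, hq.2⟩⟩) h2
    rw [hp.1, hq.1, h1, this])
  refine ⟨d + 1, fun n a e => ?_⟩
  obtain ⟨p, hp, hpl⟩ := exists_min_prog U hU (ncode n a)
  obtain ⟨j, hj⟩ := (S.spec _ _).1 hp
  obtain ⟨x, hx, hxH⟩ := hd (List.replicate e true ++ false :: p) (e, p, j, n, a) (by
    simp only [R, Bool.and_eq_true, decide_eq_true_eq]; exact ⟨trivial, hj⟩)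
  simp only [R, Bool.and_eq_true, decide_eq_true_eq] at hx
  obtain ⟨e', p', j', n', a'⟩ := x
  obtain ⟨h1, h2⟩ := hx
  simp only at h1 h2 hxH
  have h3 := (rep_prefix (k := e) (k' := e') ⟨[], by rw [List.append_nil]; exact h1⟩).1
  subst h3
  have h4 : p = p' := by simpa using h1
  subst h4
  have h5 := Part.mem_unique ((S.spec _ _).2 ⟨_, h2⟩) hp
  obtain ⟨e1, e2⟩ := ncode_inj h5
  subst e1; subst e2
  simp only [List.length_append, List.length_replicate, List.length_cons] at hxH
  omega

set_option maxHeartbeats 1000000 in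
theorem search {U : Computer} (S : Stp U) (hU : IsOptimal U) {T : ℝ} (hT : 0 < T) (hT1 : T < 1) {F : ℕ → ℕ}
    (hFc : Computable F) (hF : ∀ M, |(∑' p, zterm U T p) * 2 ^ M - F M| ≤ 2) (J : ℕ) (hJ : 0 < J) :
    ∃ E d : ℕ, ∀ᶠ n : ℕ in atTop, ∃ a, ⌊T * 2 ^ n⌋₊ ≤ a ∧ a ≤ ⌊T * 2 ^ n⌋₊ + E ∧
      (H U (ncode n a) : ℝ) ≤ (T + 2 / J) * n + d := by
  obtain ⟨W, hW, hA⟩ := S.A3 hU hT (show T < (T + 1) / 2 by linarith) (by linarith)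
  obtain ⟨D, hD⟩ := exists_nat_gt W
  obtain ⟨κ, k0, hκ, hA4⟩ := S.A4 hU hT hT1
  set u := ⌈J * T⌉₊ with hu
  have hu1 : J * T ≤ u := Nat.le_ceil _
  have hu2 : (u : ℝ) ≤ J * T + 1 := (Nat.ceil_lt_add_one (by positivity)).le
  obtain ⟨E, hE⟩ := exists_nat_gt ((D + 1) / κ + 1)
  let R : List Bool → (ℕ × ℕ × ℕ × ℕ × ℕ × ℕ) → Bool := fun p x =>
    decide (p = List.replicate x.1 true ++ false :: (List.replicate x.2.1 true ++ false ::
      toBits (u * (x.1 + 1)) x.2.2.1)) && (decide (x.2.2.1 < 2 ^ (u * (x.1 + 1))) && (decide (k0 ≤ x.2.2.2.1) &&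
      (decide (x.2.2.2.2.1 ≤ 2 ^ (J * x.1 + x.2.1)) && (S.chkO x.2.2.1 (u * (x.1 + 1)) x.2.2.2.1 x.2.2.2.2.2 &&
      (S.chk F x.2.2.2.1 x.2.2.2.2.1 (2 ^ (J * x.1 + x.2.1)) x.2.2.2.2.2 &&
      S.chkU F D x.2.2.2.1 x.2.2.2.2.1 (J * x.1 + x.2.1) x.2.2.2.2.2)))))
  have hR : Computable₂ R := by
    have x1 : Computable fun y : List Bool × (ℕ × ℕ × ℕ × ℕ × ℕ × ℕ) => y.2.1 := Computable.fst.comp Computable.snd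
    have r1 : Computable fun y : List Bool × (ℕ × ℕ × ℕ × ℕ × ℕ × ℕ) => y.2.2 := Computable.snd.comp Computable.snd
    have x2 := Computable.fst.comp r1
    have r2 := Computable.snd.comp r1
    have x3 := Computable.fst.comp r2
    have r3 := Computable.snd.comp r2
    have x4 := Computable.fst.comp r3
    have r4 := Computable.snd.comp r3
    have x5 := Computable.fst.comp r4
    have x6 := Computable.snd.comp r4
    have hm := cmul (Computable.const u) (cadd x1 (Computable.const 1))
    have hn := cadd (cmul (Computable.const J) x1) x2
    exact cand (ceq Computable.fst (crep x1 (crep x2 (ctoBits hm x3)))) (cand (clt x3 (cpow2 hm))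
      (cand (cle (Computable.const k0) x4) (cand (cle x5 (cpow2 hn)) (cand (S.cchkO x3 hm x4 x6)
        (cand (S.cchk hFc x4 x5 (cpow2 hn) x6) (S.cchkU hFc D x4 x5 hn x6))))))
  have hg : Computable fun x : ℕ × ℕ × ℕ × ℕ × ℕ × ℕ => ncode (J * x.1 + x.2.1) x.2.2.2.2.1 := by
    have r4 : Computable fun x : ℕ × ℕ × ℕ × ℕ × ℕ × ℕ => x.2.2.2.2 :=
      Computable.snd.comp (Computable.snd.comp (Computable.snd.comp Computable.snd))
    exact cncode (cadd (cmul (Computable.const J) Computable.fst) (Computable.fst.comp Computable.snd)) (Computable.fst.comp r4)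
  obtain ⟨d, hd⟩ := machine U hU R hR _ hg (by
    intro p q x y hp hq h
    simp only [R, Bool.and_eq_true, decide_eq_true_eq] at hp hq
    rw [hp.1, hq.1] at h
    obtain ⟨h1, h2⟩ := rep_prefix h
    obtain ⟨h3, h4⟩ := rep_prefix h2
    have h5 := h4.eq_of_length (by simp [h1])
    rw [hp.1, hq.1, h5, h1, h3])
  refine ⟨E, d + 2 + J + u, ?_⟩
  have hev : ∀ᶠ n : ℕ in atTop, (1 : ℝ) / 2 ^ n ≤ (1 - T) / 2 := by
    have : Tendsto (fun n : ℕ => (1 : ℝ) / 2 ^ n) atTop (nhds 0) :=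
      tendsto_const_nhds.div_atTop (tendsto_pow_atTop_atTop_of_one_lt (by norm_num))
    exact this.eventually_le_const (show (0 : ℝ) < (1 - T) / 2 by linarith)
  filter_upwards [hev] with n hn
  set Z := ∑' p, zterm U T p with hZ
  set Ω := ∑' p, zterm U 1 p with hΩ
  have hN : (0 : ℝ) < 2 ^ n := by positivity
  have hZ0 : 0 ≤ Z := tsum_nonneg fun p => by unfold zterm; positivity
  have hΩ1 : Ω ≤ 1 := le_of_tendsto' (S.Zk_tendsto hU one_pos le_rfl) (S.Zk_one_le hU)
  have hΩ0 : 0 < Ω := by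
    obtain ⟨k, hk⟩ := (S.exists_gt hU hT hT1 le_rfl).exists
    have := S.Zk_le hU one_pos le_rfl k
    linarith
  set q := n / J with hq
  set r := n % J with hr
  have hqr : J * q + r = n := Nat.div_add_mod n J
  have hrJ : r < J := Nat.mod_lt _ hJ
  set m := u * (q + 1) with hm
  have hMm : (0 : ℝ) < 2 ^ m := by positivity
  have hmT : T * n ≤ m := by
    have h1 : (n : ℝ) ≤ J * (q + 1) := by
      have : n ≤ J * (q + 1) := by rw [← hqr, mul_add]; omega
      exact_mod_cast this
    calc T * n ≤ T * (J * (q + 1)) := by gcongr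
      _ = (J * T) * (q + 1) := by ring
      _ ≤ u * (q + 1) := by gcongr
      _ = m := by rw [hm]; push_cast; ring
  obtain ⟨v, hv⟩ : ∃ v, ⌈Ω * 2 ^ m⌉₊ = v + 1 :=
    Nat.exists_eq_succ_of_ne_zero (Nat.ceil_pos.2 (by positivity)).ne'
  have hv1 : (v : ℝ) < Ω * 2 ^ m := Nat.lt_ceil.1 (by omega)
  have hv2 : Ω * 2 ^ m ≤ v + 1 := by have := Nat.le_ceil (Ω * 2 ^ m); rw [hv] at this; exact_mod_cast this
  have hv3 : v < 2 ^ m := by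
    have : (v : ℝ) < 2 ^ m := by nlinarith
    exact_mod_cast this
  set w := ⌊T * 2 ^ n⌋₊ with hw
  have hvlt : w < 2 ^ n := floor_lt hT hT1 n
  have hft := floor_t hT n
  rw [← hw] at hft
  set t := ((w + 1 : ℕ) : ℝ) / (2 ^ n : ℕ) with ht
  have hle1 : t ≤ 1 := by linarith
  obtain ⟨k, ⟨hk1, hk2⟩, hk3⟩ := (((S.exists_gt hU hT hft.1 hle1).and (eventually_ge_atTop k0)).and
    ((S.Zk_tendsto hU one_pos le_rfl).eventually_const_lt (show (v : ℝ) / 2 ^ m < Ω by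
      rw [div_lt_iff₀ hMm]; exact hv1))).exists
  have hk3' : (v : ℝ) < 2 ^ m * S.Zk k 1 := by rw [div_lt_iff₀ hMm] at hk3; linarith
  have hk4 : S.Zk k t < Z + D / 2 ^ n := by
    have h1 := hA k t hft.1.le (by linarith)
    have h2 := S.Zk_le hU hT hT1.le k
    have h3 : W * (t - T) ≤ W * (1 / 2 ^ n) := by gcongr; linarith
    have h4 : W * (1 / 2 ^ n) < D / 2 ^ n := by rw [mul_one_div]; gcongr
    linarith
  obtain ⟨M, ⟨hM1, hM2⟩, hM3⟩ := (((S.chkO_complete hk3').and (S.chk_complete hF (Nat.succ_pos w) hk1)).and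
    (S.chkU_complete hF (Nat.succ_pos w) hk4)).exists
  obtain ⟨x, hx, hxH⟩ := hd (List.replicate q true ++ false :: (List.replicate r true ++ false :: toBits m v))
    (q, r, v, k, w + 1, M) (by
      simp only [R, Bool.and_eq_true, decide_eq_true_eq]
      rw [hqr]
      exact ⟨rfl, hv3, hk2, hvlt, hM1, hM2, hM3⟩)
  simp only [R, Bool.and_eq_true, decide_eq_true_eq] at hx
  obtain ⟨q', r', v', k', a, M'⟩ := x
  obtain ⟨h1, h2, h3, h4, h5, h6, h7⟩ := hx
  simp only at h1 h2 h3 h4 h5 h6 h7 hxH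
  obtain ⟨e1, g1⟩ := rep_prefix (k := q) (k' := q') ⟨[], by rw [List.append_nil]; exact h1⟩
  obtain ⟨e2, g2⟩ := rep_prefix g1
  clear_value q r
  subst e1; subst e2
  rw [← hm] at g2 h2 h5
  have e3 : v = v' := toBits_inj hv3 h2 (g2.eq_of_length (by simp))
  subst e3
  rw [hqr] at h4 h6 h7 hxH
  obtain ⟨ha, c1⟩ := S.chk_sound hF h6
  have c2 := S.chkU_sound hF ha h7
  have c3 := S.chkO_sound h5
  set t' := (a : ℝ) / (2 ^ n : ℕ) with ht'
  have ht'0 : 0 < t' := by positivity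
  have ht'1 : t' ≤ 1 := by rw [ht', div_le_one (by positivity)]; exact Nat.cast_le.2 h4
  have hTt := S.lt_of_gt hU ht'0 hT1.le c1
  have c4 := hA4 k' t' h3 hTt.le ht'1
  have c5 := S.A5 hU hT hT1 (k := k') (m := m) (by
    rw [Real.rpow_neg (by norm_num), Real.rpow_natCast, ← one_div, ← hΩ, le_div_iff₀ hMm]
    nlinarith)
  have c6 : (2 : ℝ) ^ (-(m : ℝ) / T) ≤ 1 / 2 ^ n := by
    rw [one_div, ← Real.rpow_natCast, ← Real.rpow_neg (by norm_num)]
    apply Real.rpow_le_rpow_of_exponent_le (by norm_num)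
    rw [div_le_iff₀ hT]; linarith
  have c7 : κ * (t' - T) ≤ (D + 1) / 2 ^ n := by
    rw [add_div]; linarith
  have c8 : (a : ℝ) ≤ T * 2 ^ n + (D + 1) / κ := by
    have e : (a : ℝ) = t' * 2 ^ n := by rw [ht']; push_cast; field_simp
    rw [le_div_iff₀ hN] at c7
    have : (t' - T) * 2 ^ n ≤ (D + 1) / κ := by rw [le_div_iff₀ hκ]; linarith
    linarith
  have c9 : T * 2 ^ n < a := by
    rw [ht', lt_div_iff₀ (by positivity)] at hTt
    push_cast at hTt; exact hTt
  refine ⟨a, ?_, ?_, ?_⟩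
  · exact Nat.floor_le_of_le c9.le
  · have h8 := Nat.lt_floor_add_one (T * 2 ^ n)
    rw [← hw] at h8
    have : (a : ℝ) ≤ w + E := by linarith
    exact_mod_cast this
  · simp only [List.length_append, List.length_replicate, List.length_cons, length_toBits] at hxH
    have h8 : (H U (ncode n a) : ℝ) ≤ (q + (r + (m + 1) + 1) + d : ℕ) := by exact_mod_cast hxH
    have h9 : (r : ℝ) ≤ J := by exact_mod_cast hrJ.le
    have h10 : (J : ℝ) * q ≤ n := by
      have : J * q ≤ n := by omega
      exact_mod_cast this
    have hJ0 : (0 : ℝ) < J := by exact_mod_cast hJ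
    have h11 : (q : ℝ) ≤ n / J := by rw [le_div_iff₀ hJ0]; linarith
    have h12 : (m : ℝ) ≤ T * n + n / J + u := by
      rw [hm]; push_cast
      have : (u : ℝ) * q ≤ (J * T + 1) * q := by gcongr
      have : T * (J * q) ≤ T * n := by gcongr
      linarith
    push_cast at h8 ⊢
    have e : (T + 2 / J) * n = T * n + n / J + n / J := by ring
    rw [e]
    linarith

theorem main_bound {U : Computer} (S : Stp U) (hU : IsOptimal U) {T : ℝ} (hT : 0 < T) (hT1 : T < 1) {F : ℕ → ℕ}
    (hFc : Computable F) (hF : ∀ M, |(∑' p, zterm U T p) * 2 ^ M - F M| ≤ 2) :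
    Tendsto (fun n : ℕ => (H U (bits T n) : ℝ) / n) atTop (nhds T) := by
  have hinv : ∀ C : ℝ, Tendsto (fun n : ℕ => C / (n : ℝ)) atTop (nhds 0) := fun C =>
    tendsto_const_nhds.div_atTop tendsto_natCast_atTop_atTop
  refine tendsto_order.2 ⟨fun b hb => ?_, fun b hb => ?_⟩
  · obtain ⟨c, hc⟩ := S.weakly hU hT hT1 hFc hF
    filter_upwards [(hinv c).eventually_lt_const (sub_pos.2 hb), eventually_ge_atTop 1] with n h1 h2
    have hn : (0 : ℝ) < n := by exact_mod_cast h2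
    have := hc n h2
    rw [lt_div_iff₀ hn]
    rw [div_lt_iff₀ hn] at h1
    linarith
  · obtain ⟨J, hJ⟩ := exists_nat_gt (4 / (b - T))
    have hbT : 0 < b - T := sub_pos.2 hb
    have hJ0 : (0 : ℝ) < J := lt_trans (by positivity) hJ
    have hJ1 : 0 < J := by exact_mod_cast hJ0
    obtain ⟨E, d, h⟩ := search S hU hT hT1 hFc hF J hJ1
    obtain ⟨d', hd'⟩ := correction S hU
    filter_upwards [h, (hinv (E + d + d')).eventually_lt_const (show 0 < (b - T) / 2 by linarith),
      eventually_ge_atTop 1] with n hn h1 h2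
    have hn0 : (0 : ℝ) < n := by exact_mod_cast h2
    obtain ⟨a, ha1, ha2, hH⟩ := hn
    have h3 := hd' n a (a - ⌊T * 2 ^ n⌋₊)
    rw [Nat.sub_sub_self ha1, ← bits_eq hT hT1] at h3
    have h4 : H U (bits T n) ≤ H U (ncode n a) + E + d' := by omega
    have h5 : (H U (bits T n) : ℝ) ≤ H U (ncode n a) + E + d' := by exact_mod_cast h4
    rw [div_lt_iff₀ hn0] at h1 ⊢
    have h6 : 2 / (J : ℝ) ≤ (b - T) / 2 := by
      rw [div_lt_iff₀ hbT] at hJ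
      rw [div_le_iff₀ hJ0]; linarith
    have h7 : (T + 2 / J) * n ≤ (T + (b - T) / 2) * n := by gcongr
    nlinarith

/-- **Theorem (paper Thm 14, fixed point theorem on compression rate).**
For `T ∈ (0,1)`, if `Z(T)` is a computable real number, then `T` is
right-computable but not left-computable, `T` is weakly Chaitin `T`-random
and `T`-compressible, and `lim_{n→∞} H(T_n)/n = T`. -/
theorem fixed_point_compression_rate (U : Computer) (hU : IsOptimal U)
    (T : ℝ) (hT0 : 0 < T) (hT1 : T < 1)
    (hZ : ComputableReal (∑' p, zterm U T p)) :
    RightComputable T ∧ ¬ LeftComputable T ∧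
    WeaklyChaitinRandom U T T ∧ DCompressible U T T ∧
    Tendsto (fun n : ℕ => (H U (bits T n) : ℝ) / n) atTop (nhds T) := by
  obtain ⟨S⟩ := exists_stp U
  have hZ0 : 0 ≤ ∑' p, zterm U T p := tsum_nonneg fun p => by unfold zterm; positivity
  obtain ⟨F, hFc, hF⟩ := exists_F hZ0 hZ
  have hlim := main_bound S hU hT0 hT1 hFc hF
  exact ⟨S.right hU hT0 hT1 hFc hF, S.notleft hU hT0 hT1 hFc hF, S.weakly hU hT0 hT1 hFc hF,
    hlim.limsup_eq.le, hlim⟩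
end

section
/- The set { T ∈ (0,1) : lim_{n→∞} H(T_n)/n = T } is dense in the interval [0,1]. -/
open Filter

namespace FPD


/-- The constant computer. -/
def constComputer (s : List Bool) : Computer where
  f := fun x => ((List.casesOn x (some s) (fun _ _ => none) : Option (List Bool)) : Part (List Bool))
  partrec := by
    refine Computable.ofOption (Primrec.to_comp ?_)
    exact Primrec.list_casesOn Primrec.id (Primrec.const (some s)) (Primrec.const none).to₂
  prefixFree := by
    intro p hp q hq h
    cases p with
    | nil =>
      cases q with
      | nil => rfl
      | cons a l => simp at hq
    | cons a l => simp at hp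

lemma surj (U : Computer) (hU : IsOptimal U) (s : List Bool) : ∃ p, s ∈ U.f p := by
  obtain ⟨d, hd⟩ := hU (constComputer s)
  obtain ⟨p', -, h⟩ := hd [] (by simp [constComputer])
  exact ⟨p', h s (by simp [constComputer])⟩

lemma exists_H (U : Computer) (hU : IsOptimal U) (s : List Bool) :
    ∃ p, p.length = H U s ∧ s ∈ U.f p := by
  have : (sInf {n | ∃ p : List Bool, p.length = n ∧ s ∈ U.f p}) ∈
      {n | ∃ p : List Bool, p.length = n ∧ s ∈ U.f p} := by
    apply Nat.sInf_mem
    obtain ⟨p, hp⟩ := surj U hU s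
    exact ⟨_, p, rfl, hp⟩
  exact this

lemma H_le (U : Computer) {s p : List Bool} (h : s ∈ U.f p) : H U s ≤ p.length :=
  Nat.sInf_le ⟨p, rfl, h⟩

lemma nil_notin (U : Computer) (hU : IsOptimal U) : ¬ (U.f []).Dom := by
  intro h
  obtain ⟨p, hp⟩ := surj U hU [true]
  obtain ⟨q, hq⟩ := surj U hU [false]
  have h1 := U.prefixFree [] h p (Part.dom_iff_mem.2 ⟨_, hp⟩) (List.nil_prefix)
  have h2 := U.prefixFree [] h q (Part.dom_iff_mem.2 ⟨_, hq⟩) (List.nil_prefix)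
  subst h1; subst h2
  have := Part.mem_unique hp hq
  simp at this

/-- Computer that strips a header and appends something. -/
def appComputer (U : Computer) (hU : IsOptimal U) (m : List Bool → ℕ) (g : List Bool → List Bool)
    (hm : Computable m) (hg : Computable g)
    (hmm : ∀ x y, x <+: y → m x < x.length → m x = m y) : Computer where
  f := fun x => (U.f (x.drop (m x))).map (fun o => o ++ g x)
  partrec := by
    refine Partrec.map (U.partrec.comp (Primrec.list_drop.to_comp.comp hm Computable.id)) ?_
    exact Computable.list_append.comp Computable.snd (hg.comp Computable.fst)
  prefixFree := by
    intro x hx y hy h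
    have hx' : (U.f (x.drop (m x))).Dom := hx
    have hy' : (U.f (y.drop (m y))).Dom := hy
    have key : ∀ z, (U.f (z.drop (m z))).Dom → m z < z.length := by
      intro z hz
      by_contra hlt
      rw [List.drop_eq_nil_of_le (by omega)] at hz
      exact nil_notin U hU hz
    have e := hmm x y h (key x hx')
    rw [← e] at hy'
    have := U.prefixFree _ hx' _ hy' (h.drop _)
    have hl := congrArg List.length this
    have h1 := key x hx'
    simp only [List.length_drop] at hl
    have := h.length_le
    exact h.eq_of_length (by omega)

lemma app_bound (U : Computer) (hU : IsOptimal U) (m : List Bool → ℕ) (g : List Bool → List Bool)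
    (hm : Computable m) (hg : Computable g)
    (hmm : ∀ x y, x <+: y → m x < x.length → m x = m y) :
    ∃ d, ∀ s h u, (∀ p, p ≠ [] → m (h ++ p) = h.length ∧ g (h ++ p) = u) →
      H U (s ++ u) ≤ H U s + h.length + d := by
  obtain ⟨d, hd⟩ := hU (appComputer U hU m g hm hg hmm)
  refine ⟨d, fun s h u hh => ?_⟩
  obtain ⟨p, hp, hs⟩ := exists_H U hU s
  have hp0 : p ≠ [] := by
    rintro rfl
    exact nil_notin U hU (Part.dom_iff_mem.2 ⟨_, hs⟩)
  obtain ⟨e1, e2⟩ := hh p hp0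
  have hmem : s ++ u ∈ (appComputer U hU m g hm hg hmm).f (h ++ p) := by
    simp only [appComputer, e1, e2, List.drop_left, Part.mem_map_iff]
    exact ⟨s, hs, rfl⟩
  obtain ⟨p', hl, hp'⟩ := hd (h ++ p) (Part.dom_iff_mem.2 ⟨_, hmem⟩)
  have := H_le U (hp' _ hmem)
  simp only [List.length_append] at hl
  omega

lemma bit_bound (U : Computer) (hU : IsOptimal U) : ∃ d, ∀ s b, H U (s ++ [b]) ≤ H U s + d := by
  obtain ⟨d, hd⟩ := app_bound U hU (fun _ => 1) (fun x => x.take 1) (Computable.const 1)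
    (Primrec.list_take.to_comp.comp (Computable.const 1) Computable.id) (by simp)
  refine ⟨1 + d, fun s b => ?_⟩
  have := hd s [b] [b] (by simp)
  simpa [add_assoc] using this

def hd (x : List Bool) : ℕ := x.findIdx (fun b => !b)

lemma hd_comp : Primrec hd :=
  Primrec.list_findIdx Primrec.id (Primrec.not.comp Primrec.snd).to₂

lemma hd_prefix {x y : List Bool} (h : x <+: y) (hx : hd x < x.length) : hd x = hd y := by
  obtain ⟨z, rfl⟩ := h
  unfold hd at *
  rw [List.findIdx_append, if_pos hx]

lemma hd_rep (k : ℕ) (l : List Bool) : hd (List.replicate k true ++ false :: l) = k := by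
  induction k with
  | zero => simp [hd, List.findIdx_cons]
  | succ n ih => simp only [hd] at ih ⊢; simp [List.replicate_succ, List.findIdx_cons, ih]

lemma rand_bound (U : Computer) (hU : IsOptimal U) : ∃ d, ∀ s (k : ℕ) (t : List Bool),
    t.length = k * k → H U (s ++ (t ++ [false])) ≤ H U s + k * k + k + d := by
  obtain ⟨d, hdd⟩ := app_bound U hU (fun x => hd x + 1 + hd x * hd x)
    (fun x => ((x.drop (hd x + 1)).take (hd x * hd x)) ++ [false])
    (Primrec.nat_add.comp (Primrec.succ.comp hd_comp) (Primrec.nat_mul.comp hd_comp hd_comp)).to_comp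
    (Primrec.list_append.comp (Primrec.list_take.comp (Primrec.nat_mul.comp hd_comp hd_comp)
      (Primrec.list_drop.comp (Primrec.succ.comp hd_comp) Primrec.id)) (Primrec.const [false])).to_comp
    (by
      intro x y h hlt
      have := hd_prefix h (by omega)
      simp [this])
  refine ⟨d + 1, fun s k t ht => ?_⟩
  have := hdd s (List.replicate k true ++ false :: t) (t ++ [false]) (by
    intro p _
    have e : hd ((List.replicate k true ++ false :: t) ++ p) = k := by
      rw [List.append_assoc]; exact hd_rep k _
    simp only [e]
    refine ⟨by simp [ht]; omega, ?_⟩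
    have : (List.replicate k true ++ false :: t) ++ p
       = (List.replicate k true ++ [false]) ++ (t ++ p) := by simp
    rw [this, List.drop_left' (by simp), List.take_left' ht])
  simp [ht] at this
  omega

lemma zero_bound (U : Computer) (hU : IsOptimal U) : ∃ d, ∀ s (k : ℕ),
     H U (s ++ List.replicate (k * k + 1) false) ≤ H U s + k + d := by
  obtain ⟨d, hdd⟩ := app_bound U hU (fun x => hd x + 1)
    (fun x => (List.range (hd x * hd x + 1)).map (fun _ => false))
    (Primrec.succ.comp hd_comp).to_comp
    (Primrec.list_map (Primrec.list_range.comp (Primrec.succ.comp (Primrec.nat_mul.comp hd_comp hd_comp)))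
      (Primrec.const false).to₂).to_comp
    (by
      intro x y h hlt
      have := hd_prefix h (by omega)
      simp [this])
  refine ⟨d + 1, fun s k => ?_⟩
  have := hdd s (List.replicate k true ++ [false]) (List.replicate (k * k + 1) false) (by
    intro p _
    have e : hd ((List.replicate k true ++ [false]) ++ p) = k := by
      rw [List.append_assoc]; exact hd_rep k _
    simp only [e]
    refine ⟨by simp, ?_⟩
    simp)
  simp at this
  omega

/-- mass of programs whose output extends `s`. -/
noncomputable def mu (U : Computer) (s : List Bool) : ENNReal :=
  open Classical in
  ∑' p : List Bool, if ∃ o ∈ U.f p, s <+: o then (2⁻¹ : ENNReal) ^ p.length else 0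

lemma mu_anti (U : Computer) {s t : List Bool} (h : s <+: t) : mu U t ≤ mu U s := by
  unfold mu
  refine ENNReal.tsum_le_tsum fun p => ?_
  by_cases h1 : ∃ o ∈ U.f p, t <+: o
  · obtain ⟨o, ho, hto⟩ := h1
    rw [if_pos ⟨o, ho, hto⟩, if_pos ⟨o, ho, h.trans hto⟩]
  · rw [if_neg h1]; exact zero_le

lemma mu_split (U : Computer) (s : List Bool) :
    mu U (s ++ [true]) + mu U (s ++ [false]) ≤ mu U s := by
  unfold mu
  rw [← ENNReal.tsum_add]
  refine ENNReal.tsum_le_tsum fun p => ?_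
  by_cases h1 : ∃ o ∈ U.f p, s ++ [true] <+: o
  · have h2 : ¬ ∃ o ∈ U.f p, s ++ [false] <+: o := by
      rintro ⟨o, ho, a⟩
      obtain ⟨o', ho', b⟩ := h1
      obtain rfl := Part.mem_unique ho ho'
      have := List.prefix_of_prefix_length_le a b (by simp)
      simp at this
    obtain ⟨o, ho, b⟩ := h1
    rw [if_pos ⟨o, ho, b⟩, if_neg h2, if_pos ⟨o, ho, (List.prefix_append _ _).trans b⟩]
    simp
  · rw [if_neg h1]
    by_cases h2 : ∃ o ∈ U.f p, s ++ [false] <+: o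
    · obtain ⟨o, ho, b⟩ := h2
      rw [if_pos ⟨o, ho, b⟩, if_pos ⟨o, ho, (List.prefix_append _ _).trans b⟩]
      simp
    · rw [if_neg h2]; simp

lemma exists_bit (U : Computer) (s : List Bool) : ∃ b, mu U (s ++ [b]) ≤ 2⁻¹ * mu U s := by
  by_contra hcon
  push Not at hcon
  have h1 := hcon true
  have h2 := hcon false
  have h3 := ENNReal.add_lt_add h1 h2
  rw [← add_mul, ENNReal.inv_two_add_inv_two, one_mul] at h3
  exact absurd (mu_split U s) (not_le.2 h3)

lemma exists_block (U : Computer) (s : List Bool) (L : ℕ) :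
    ∃ t : List Bool, t.length = L ∧ mu U (s ++ t) ≤ 2⁻¹ ^ L * mu U s := by
  induction L with
  | zero => exact ⟨[], rfl, by simp⟩
  | succ n ih =>
    obtain ⟨t, ht, hm⟩ := ih
    obtain ⟨b, hb⟩ := exists_bit U (s ++ t)
    refine ⟨t ++ [b], by simp [ht], ?_⟩
    rw [← List.append_assoc]
    refine hb.trans ?_
    rw [pow_succ', mul_assoc]
    gcongr

lemma decodable (S : Set (List Bool)) (h : PrefixFree S) (h0 : [] ∉ S) :
    InformationTheory.UniquelyDecodable S := by
  intro L₁
  induction L₁ with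
  | nil =>
    intro L₂ _ h2 e
    cases L₂ with
    | nil => rfl
    | cons a l =>
      simp at e
      exact absurd (e.1 ▸ h2 a (by simp)) h0
  | cons a l ih =>
    intro L₂ h1 h2 e
    cases L₂ with
    | nil =>
      simp at e
      exact absurd (e.1 ▸ h1 a (by simp)) h0
    | cons b l' =>
      have ha : a <+: (a :: l).flatten := by simp
      have hb : b <+: (a :: l).flatten := by rw [e]; simp
      have hab : a = b := by
        rcases List.prefix_or_prefix_of_prefix ha hb with hh | hh
        · exact h _ (h1 a (by simp)) _ (h2 b (by simp)) hh
        · exact (h _ (h2 b (by simp)) _ (h1 a (by simp)) hh).symm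
      subst hab
      simp only [List.flatten_cons, List.append_cancel_left_eq] at e
      rw [ih l' (fun w hw => h1 w (by simp [hw])) (fun w hw => h2 w (by simp [hw])) e]

lemma mu_le_one (U : Computer) (hU : IsOptimal U) (s : List Bool) : mu U s ≤ 1 := by
  classical
  unfold mu
  rw [ENNReal.tsum_eq_iSup_sum]
  refine iSup_le fun F => ?_
  rw [← Finset.sum_filter]
  set S := F.filter (fun p => ∃ o ∈ U.f p, s <+: o)
  have hS : ∀ p ∈ S, (U.f p).Dom := by
    intro p hp
    obtain ⟨o, ho, -⟩ := (Finset.mem_filter.1 hp).2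
    exact Part.dom_iff_mem.2 ⟨o, ho⟩
  have hd := decodable (S : Set (List Bool))
    (fun p hp q hq h => U.prefixFree p (hS p hp) q (hS q hq) h)
    (fun h => nil_notin U hU (hS _ h))
  have := InformationTheory.kraft_mcmillan_inequality hd
  simp only [Fintype.card_bool] at this
  have h2 : ∑ p ∈ S, (2⁻¹ : ENNReal) ^ p.length
      = ENNReal.ofReal (∑ p ∈ S, (1 / ((2:ℕ):ℝ)) ^ p.length) := by
    rw [ENNReal.ofReal_sum_of_nonneg (fun _ _ => by positivity)]
    refine Finset.sum_congr rfl fun p _ => ?_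
    rw [ENNReal.ofReal_pow (by positivity)]
    congr 1
    rw [one_div, ENNReal.ofReal_inv_of_pos (by norm_num)]
    norm_num
  rw [h2]
  exact ENNReal.ofReal_le_one.2 this

lemma le_H (U : Computer) (hU : IsOptimal U) (s : List Bool) (r : ℕ)
    (h : mu U s ≤ 2⁻¹ ^ r) : r ≤ H U s := by
  classical
  obtain ⟨p, hp, hs⟩ := exists_H U hU s
  have h1 : (2⁻¹ : ENNReal) ^ p.length ≤ mu U s := by
    unfold mu
    refine le_trans ?_ (ENNReal.le_tsum p)
    rw [if_pos ⟨s, hs, List.prefix_rfl⟩]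
  have h2 := h1.trans h
  rw [← hp]
  by_contra hlt
  push Not at hlt
  have : (2⁻¹ : ENNReal) ^ r < 2⁻¹ ^ p.length := by
    rw [← ENNReal.inv_pow, ← ENNReal.inv_pow, ENNReal.inv_lt_inv]
    exact_mod_cast Nat.pow_lt_pow_right (by norm_num : 1 < 2) hlt
  exact absurd h2 (not_le.2 this)

/-- value of a finite binary string. -/
noncomputable def val : List Bool → ℝ
  | [] => 0
  | b :: s => ((if b then 1 else 0) + val s) / 2

lemma val_nonneg (s : List Bool) : 0 ≤ val s := by
  induction s with
  | nil => simp [val]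
  | cons b s ih => simp only [val]; split_ifs <;> linarith

lemma val_add_le (s : List Bool) : val s + (1 / 2) ^ s.length ≤ 1 := by
  induction s with
  | nil => simp [val]
  | cons b s ih =>
    simp only [val, List.length_cons, pow_succ]; split_ifs <;> linarith

lemma val_append (s t : List Bool) : val (s ++ t) = val s + (1 / 2) ^ s.length * val t := by
  induction s with
  | nil => simp [val]
  | cons b s ih =>
    simp only [val, List.length_cons, pow_succ, List.cons_append, ih]; ring

lemma val_false (t : List Bool) : val (t ++ [false]) = val t := by
  simp [val_append, val]

lemma exists_approx (n : ℕ) : ∀ x : ℝ, 0 ≤ x → x < 1 →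
    ∃ s : List Bool, s.length = n ∧ val s ≤ x ∧ x ≤ val s + (1 / 2) ^ n := by
  induction n with
  | zero => intro x h0 h1; exact ⟨[], rfl, by simp [val, h0], by simp [val]; linarith⟩
  | succ n ih =>
    intro x h0 h1
    by_cases h : x < 1 / 2
    · obtain ⟨s, hs, h2, h3⟩ := ih (2 * x) (by linarith) (by linarith)
      exact ⟨false :: s, by simp [hs], by simp [val]; linarith, by simp [val, pow_succ] at h3 ⊢; linarith⟩
    · obtain ⟨s, hs, h2, h3⟩ := ih (2 * x - 1) (by linarith) (by linarith)
      exact ⟨true :: s, by simp [hs], by simp [val]; linarith, by simp [val, pow_succ] at h3 ⊢; linarith⟩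

lemma bits_cons (b : Bool) (x : ℝ) (h0 : 0 ≤ x) (h1 : x < 1) (n : ℕ) :
    bits (((if b then 1 else 0) + x) / 2) (n + 1) = b :: bits x n := by
  have f1 : Int.fract x = x := Int.fract_eq_self.2 ⟨h0, h1⟩
  have f2 : Int.fract (((if b then 1 else 0) + x) / 2) = ((if b then 1 else 0) + x) / 2 := by
    refine Int.fract_eq_self.2 ⟨?_, ?_⟩ <;> split_ifs <;> linarith
  have key : ∀ i : ℕ, ⌊Int.fract (((if b then 1 else 0) + x) / 2) * 2 ^ (i + 1)⌋
      = ⌊Int.fract x * 2 ^ i⌋ + (if b then 1 else 0) * 2 ^ i := by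
    intro i
    rw [f1, f2]
    have : ((if b then 1 else 0) + x) / 2 * 2 ^ (i + 1)
       = x * 2 ^ i + (((if b then 1 else 0) * 2 ^ i : ℤ) : ℝ) := by
      push_cast
      rw [pow_succ]; ring
    rw [this, Int.floor_add_intCast]
  unfold bits
  rw [List.range_succ_eq_map, List.map_cons, List.map_map]
  congr 1
  · unfold binDigit
    rw [key 0, f1]
    have : ⌊x⌋ = 0 := Int.floor_eq_zero_iff.2 ⟨h0, h1⟩
    cases b <;> simp [this]
  · refine List.map_congr_left fun i _ => ?_
    simp only [Function.comp, binDigit, Nat.succ_eq_add_one]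
    rw [key (i + 1)]
    have : (⌊Int.fract x * 2 ^ (i + 1)⌋ + (if b then 1 else 0) * 2 ^ (i + 1)) % 2
      = ⌊Int.fract x * 2 ^ (i + 1)⌋ % 2 := by
      rw [pow_succ (2 : ℤ), ← mul_assoc, Int.add_mul_emod_self_right]
    rw [this]

lemma bits_eq (s : List Bool) : ∀ x : ℝ, val s ≤ x → x < val s + (1 / 2) ^ s.length →
    bits x s.length = s := by
  induction s with
  | nil => intro x _ _; simp [bits]
  | cons b s ih =>
    intro x h1 h2
    simp only [val, List.length_cons, pow_succ] at h1 h2 ⊢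
    have e : x = ((if b then 1 else 0) + (2 * x - (if b then 1 else 0))) / 2 := by ring
    have v0 := val_nonneg s
    have v1 := val_add_le s
    rw [e, bits_cons b _ (by linarith) (by linarith), ih _ (by linarith) (by linarith)]

lemma bits_prefix (x : ℝ) {n m : ℕ} (h : n ≤ m) : bits x n <+: bits x m := by
  obtain ⟨j, rfl⟩ := Nat.exists_eq_add_of_le h
  unfold bits
  rw [List.range_add, List.map_append]
  exact List.prefix_append _ _

lemma bits_length (x : ℝ) (n : ℕ) : (bits x n).length = n := by simp [bits]

lemma bits_succ (x : ℝ) (n : ℕ) : bits x (n + 1) = bits x n ++ [binDigit x (n + 1)] := by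
  simp [bits, List.range_succ]

lemma H_bits_add (U : Computer) (x : ℝ) (d : ℕ) (hd : ∀ s b, H U (s ++ [b]) ≤ H U s + d)
    (n j : ℕ) : H U (bits x (n + j)) ≤ H U (bits x n) + d * j := by
  induction j with
  | zero => simp
  | succ j ih =>
    rw [← add_assoc, bits_succ]
    have := hd (bits x (n + j)) (binDigit x (n + j + 1))
    rw [mul_add]; omega

def Step (U : Computer) (s : ℕ → List Bool) (r : ℕ → ℕ) (k : ℕ) : Prop :=
  ((r k : ℝ) < (s k).length * val (s k) ∧ r (k + 1) = r k + k * k ∧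
    ∃ t : List Bool, t.length = k * k ∧ mu U (s k ++ t) ≤ 2⁻¹ ^ (k * k) * mu U (s k) ∧
      s (k + 1) = s k ++ (t ++ [false])) ∨
  ((s k).length * val (s k) ≤ (r k : ℝ) ∧ r (k + 1) = r k ∧
    s (k + 1) = s k ++ List.replicate (k * k + 1) false)

lemma exists_seq (U : Computer) (σ : List Bool) :
    ∃ (s : ℕ → List Bool) (r : ℕ → ℕ), s 0 = σ ∧ r 0 = 0 ∧ ∀ k, Step U s r k := by
  classical
  choose t ht1 ht2 using exists_block U
  let st : ℕ → List Bool × ℕ := fun k => Nat.rec (σ, 0) (fun k p =>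
    if (p.2 : ℝ) < p.1.length * val p.1 then (p.1 ++ (t p.1 (k * k) ++ [false]), p.2 + k * k)
    else (p.1 ++ List.replicate (k * k + 1) false, p.2)) k
  have hst : ∀ k, st (k + 1) = if ((st k).2 : ℝ) < (st k).1.length * val (st k).1
    then ((st k).1 ++ (t (st k).1 (k * k) ++ [false]), (st k).2 + k * k)
    else ((st k).1 ++ List.replicate (k * k + 1) false, (st k).2) := fun k => rfl
  refine ⟨fun k => (st k).1, fun k => (st k).2, rfl, rfl, fun k => ?_⟩
  unfold Step
  by_cases h : ((st k).2 : ℝ) < (st k).1.length * val (st k).1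
  · left
    have e := hst k
    rw [if_pos h] at e
    exact ⟨h, congrArg Prod.snd e, _, ht1 _ _, ht2 _ _, congrArg Prod.fst e⟩
  · right
    have e := hst k
    rw [if_neg h] at e
    exact ⟨not_lt.1 h, (congrArg Prod.snd e :), congrArg Prod.fst e⟩

lemma Step.form {U : Computer} {s : ℕ → List Bool} {r : ℕ → ℕ} {k : ℕ} (h : Step U s r k) :
    ∃ t : List Bool, t.length = k * k ∧ s (k + 1) = s k ++ (t ++ [false]) := by
  rcases h with ⟨-, -, t, h1, -, h2⟩ | ⟨-, -, h2⟩
  · exact ⟨t, h1, h2⟩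
  · exact ⟨List.replicate (k * k) false, by simp, by rw [h2, List.replicate_succ']⟩

lemma seq_len {U : Computer} {s : ℕ → List Bool} {r : ℕ → ℕ} (h : ∀ k, Step U s r k) (k : ℕ) :
    (s (k + 1)).length = (s k).length + (k * k + 1) := by
  obtain ⟨t, h1, h2⟩ := (h k).form
  simp [h2, h1]

lemma seq_mu {U : Computer} (hU : IsOptimal U) {s : ℕ → List Bool} {r : ℕ → ℕ} (h0 : r 0 = 0)
    (h : ∀ k, Step U s r k) (k : ℕ) : mu U (s k) ≤ 2⁻¹ ^ r k := by
  induction k with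
  | zero => simpa [h0] using mu_le_one U hU (s 0)
  | succ k ih =>
    rcases h k with ⟨-, h1, t, h2, h3, h4⟩ | ⟨-, h1, h2⟩
    · rw [h4, h1, pow_add, ← List.append_assoc]
      refine (mu_anti U (List.prefix_append _ _)).trans (h3.trans ?_)
      rw [mul_comm]; gcongr
    · rw [h1, h2]
      exact (mu_anti U (List.prefix_append _ _)).trans ih

lemma seq_H {U : Computer} (hU : IsOptimal U) : ∃ d, ∀ {s : ℕ → List Bool} {r : ℕ → ℕ}
    (_ : r 0 = 0) (_ : ∀ k, Step U s r k) (k : ℕ),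
    H U (s k) ≤ H U (s 0) + r k + k * k + d * k := by
  obtain ⟨d1, hd1⟩ := rand_bound U hU
  obtain ⟨d2, hd2⟩ := zero_bound U hU
  refine ⟨d1 + d2, fun {s r} h0 h k => ?_⟩
  induction k with
  | zero => simp
  | succ k ih =>
    rcases h k with ⟨-, h1, t, h2, h3, h4⟩ | ⟨-, h1, h2⟩
    · have := hd1 (s k) k t h2
      rw [← h4] at this
      nlinarith
    · have := hd2 (s k) k
      rw [← h2] at this
      nlinarith

lemma seq_T {U : Computer} {s : ℕ → List Bool} {r : ℕ → ℕ} (h : ∀ k, Step U s r k) :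
    ∃ T : ℝ, ∀ k, val (s k) ≤ T ∧ T < val (s k) + (1 / 2) ^ (s k).length := by
  have hlow : ∀ k, val (s k) ≤ val (s (k + 1)) := by
    intro k
    obtain ⟨t, h1, h2⟩ := (h k).form
    rw [h2, val_append]
    have := val_nonneg (t ++ [false])
    have : 0 ≤ (1 / 2 : ℝ) ^ (s k).length * val (t ++ [false]) := by positivity
    linarith
  have hup : ∀ k, val (s (k + 1)) + (1 / 2) ^ (s (k + 1)).length
      < val (s k) + (1 / 2) ^ (s k).length := by
    intro k
    obtain ⟨t, h1, h2⟩ := (h k).form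
    rw [h2, val_append, val_false, List.length_append, List.length_append, pow_add, pow_add]
    have h3 := val_add_le t
    have h4 : (0:ℝ) < (1 / 2) ^ t.length := by positivity
    have h5 : (0:ℝ) < (1 / 2) ^ (s k).length := by positivity
    have : val t + (1 / 2 : ℝ) ^ t.length * (1 / 2) ^ [false].length < 1 := by
      rw [List.length_singleton, pow_one]; linarith
    nlinarith
  have hm := monotone_nat_of_le_succ hlow
  have ha := strictAnti_nat_of_succ_lt
    (f := fun k => val (s k) + (1 / 2 : ℝ) ^ (s k).length) hup
  have hle : ∀ j k, val (s j) ≤ val (s k) + (1 / 2) ^ (s k).length := by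
    intro j k
    have h1 := hm (le_max_left j k)
    have h2 := ha.antitone (le_max_right j k)
    have : (0:ℝ) < (1 / 2) ^ (s (max j k)).length := by positivity
    linarith
  refine ⟨⨆ k, val (s k), fun k => ⟨?_, ?_⟩⟩
  · exact le_ciSup (f := fun k => val (s k)) ⟨val (s 0) + (1 / 2) ^ (s 0).length, by
      rintro _ ⟨j, rfl⟩; exact hle j 0⟩ k
  · refine lt_of_le_of_lt (ciSup_le fun j => hle j (k + 1)) (hup k)

lemma n_half (n : ℕ) : (n : ℝ) * (1 / 2) ^ n ≤ 1 := by
  have : (n : ℝ) ≤ 2 ^ n := by exact_mod_cast (Nat.lt_two_pow_self).le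
  rw [one_div, inv_pow, ← div_eq_mul_inv, div_le_one (by positivity)]
  exact this

lemma seq_e {U : Computer} {s : ℕ → List Bool} {r : ℕ → ℕ} (h0 : r 0 = 0)
    (h : ∀ k, Step U s r k) (T : ℝ) (hT0 : 0 ≤ T) (hT1 : T ≤ 1)
    (hT : ∀ k, val (s k) ≤ T ∧ T < val (s k) + (1 / 2) ^ (s k).length) (k : ℕ) :
    |(r k : ℝ) - (s k).length * T| ≤ (s 0).length + (k * k + k + 1) := by
  have hn : (0:ℝ) ≤ (s 0).length := by positivity
  induction k with
  | zero =>
    simp only [h0]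
    rw [abs_le]
    have : (s 0).length * T ≤ (s 0).length * 1 := by gcongr
    have : 0 ≤ (s 0).length * T := by positivity
    constructor <;> push_cast <;> linarith
  | succ k ih =>
    have hl : ((s (k + 1)).length : ℝ) = (s k).length + (k * k + 1) := by
      exact_mod_cast seq_len h k
    rw [abs_le] at ih ⊢
    obtain ⟨i1, i2⟩ := ih
    have hk : (0:ℝ) ≤ k := by positivity
    have hkT : (k * k + 1) * T ≤ (k * k + 1 : ℝ) * 1 := by gcongr
    have hkT0 : 0 ≤ (k * k + 1 : ℝ) * T := by positivity
    rw [hl, add_mul]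
    rcases h k with ⟨h1, h2, -⟩ | ⟨h1, h2, -⟩
    · have h3 : (s k).length * val (s k) ≤ (s k).length * T := by gcongr; exact (hT k).1
      rw [h2]; push_cast
      constructor <;> nlinarith
    · have h3 : (s k).length * T ≤ (s k).length * (val (s k) + (1 / 2) ^ (s k).length) := by
        gcongr; exact (hT k).2.le
      have h4 := n_half (s k).length
      rw [mul_add] at h3
      rw [h2]; push_cast
      constructor <;> nlinarith

lemma seq_cube {U : Computer} {s : ℕ → List Bool} {r : ℕ → ℕ}
    (h : ∀ k, Step U s r k) (k : ℕ) : k ^ 3 ≤ 6 * (s k).length := by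
  induction k with
  | zero => simp
  | succ k ih => rw [seq_len h]; nlinarith

lemma seq_find {U : Computer} {s : ℕ → List Bool} {r : ℕ → ℕ}
    (h : ∀ k, Step U s r k) (n K : ℕ) (hn : (s K).length ≤ n) :
    ∃ k, K ≤ k ∧ (s k).length ≤ n ∧ n < (s (k + 1)).length := by
  by_contra hcon
  push Not at hcon
  have : ∀ j, (s (K + j)).length ≤ n := by
    intro j
    induction j with
    | zero => exact hn
    | succ j ih => exact hcon (K + j) (by omega) ih
  have h1 : ∀ j, j ≤ (s (K + j)).length := by
    intro j
    induction j with
    | zero => simp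
    | succ j ih => rw [← add_assoc, seq_len h]; omega
  have := this (n + 1)
  have := h1 (n + 1)
  omega

lemma main (U : Computer) (hU : IsOptimal U) (σ : List Bool) :
    ∃ T : ℝ, val σ ≤ T ∧ T < val σ + (1 / 2) ^ σ.length ∧
      Tendsto (fun n : ℕ => (H U (bits T n) : ℝ) / n) atTop (nhds T) := by
  obtain ⟨s, r, hs0, hr0, h⟩ := exists_seq U σ
  obtain ⟨T, hT⟩ := seq_T h
  obtain ⟨d, hd⟩ := seq_H hU
  obtain ⟨c, hc⟩ := bit_bound U hU
  have hT0 : 0 ≤ T := (val_nonneg _).trans (hT 0).1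
  have hT1 : T ≤ 1 := (hT 0).2.le.trans (val_add_le _)
  refine ⟨T, hs0 ▸ (hT 0).1, hs0 ▸ (hT 0).2, ?_⟩
  have hb : ∀ k, bits T (s k).length = s k := fun k => bits_eq _ _ (hT k).1 (hT k).2
  -- the main estimate
  obtain ⟨C, hC0, hC⟩ : ∃ C : ℝ, 0 < C ∧ ∀ k n : ℕ, 1 ≤ k → (s k).length ≤ n →
      n < (s (k + 1)).length → |(H U (bits T n) : ℝ) - n * T| ≤ C * k ^ 2 := by
    refine ⟨H U (s 0) + d + 2 * c + (s 0).length + 10, by positivity, fun k n hk h1 h2 => ?_⟩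
    obtain ⟨j, rfl⟩ := Nat.exists_eq_add_of_le h1
    rw [seq_len h] at h2
    have hj : j ≤ k * k := by omega
    have u1 := H_bits_add U T c hc (s k).length j
    rw [hb] at u1
    have u2 := hd hr0 h k
    have l1 : r k ≤ H U (bits T ((s k).length + j)) := by
      apply le_H U hU
      refine (mu_anti U ?_).trans (seq_mu hU hr0 h k)
      conv_lhs => rw [← hb k]
      exact bits_prefix T (by omega)
    have e := seq_e hr0 h T hT0 hT1 hT k
    rw [abs_le] at e ⊢
    obtain ⟨e1, e2⟩ := e
    have hk' : (1:ℝ) ≤ k := by exact_mod_cast hk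
    have hkk : (k:ℝ) ≤ k ^ 2 := by nlinarith
    have hj' : (j:ℝ) ≤ k ^ 2 := by rw [pow_two]; exact_mod_cast hj
    have hjT : (j:ℝ) * T ≤ j * 1 := by gcongr
    have hjT0 : 0 ≤ (j:ℝ) * T := by positivity
    have l1' : (r k : ℝ) ≤ H U (bits T ((s k).length + j)) := by exact_mod_cast l1
    have u' : (H U (bits T ((s k).length + j)) : ℝ) ≤
      H U (s 0) + r k + k * k + d * k + c * j := by exact_mod_cast u1.trans (by omega)
    have a1 : (d:ℝ) * k ≤ d * k ^ 2 := by gcongr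
    have a2 : (c:ℝ) * j ≤ c * k ^ 2 := by gcongr
    have a3 : ((s 0).length : ℝ) * 1 ≤ (s 0).length * k ^ 2 := by gcongr; nlinarith
    have a4 : (H U (s 0) : ℝ) * 1 ≤ H U (s 0) * k ^ 2 := by gcongr; nlinarith
    have b1 : 0 ≤ (d:ℝ) * k ^ 2 := by positivity
    have b2 : 0 ≤ (c:ℝ) * k ^ 2 := by positivity
    have b3 : 0 ≤ ((s 0).length : ℝ) * k ^ 2 := by positivity
    have b4 : 0 ≤ (H U (s 0) : ℝ) * k ^ 2 := by positivity
    push_cast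
    constructor <;> nlinarith
  rw [Metric.tendsto_atTop]
  intro ε hε
  obtain ⟨K, hK⟩ := exists_nat_gt (6 * C / ε)
  refine ⟨(s (K + 1)).length, fun n hn => ?_⟩
  obtain ⟨k, hk, h1, h2⟩ := seq_find h n (K + 1) hn
  have hb := hC k n (by omega) h1 h2
  have hcube : (k:ℝ) ^ 3 ≤ 6 * n := by exact_mod_cast (seq_cube h k).trans (by omega)
  have hkpos : (0:ℝ) < k := by exact_mod_cast (by omega : 0 < k)
  have hn0 : (0:ℝ) < n := by
    have : (0:ℝ) < (k:ℝ) ^ 3 := by positivity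
    linarith
  have hKk : (K:ℝ) ≤ k := by exact_mod_cast (by omega : K ≤ k)
  have h6 : 6 * C < ε * k := by
    rw [div_lt_iff₀ hε] at hK
    nlinarith
  rw [Real.dist_eq]
  have : (H U (bits T n) : ℝ) / n - T = ((H U (bits T n) : ℝ) - n * T) / n := by field_simp
  rw [this, abs_div, abs_of_pos hn0, div_lt_iff₀ hn0]
  have h7 : 6 * C * k ^ 2 < ε * k * k ^ 2 := by gcongr
  have h8 : ε * k ^ 3 ≤ ε * (6 * n) := by gcongr
  nlinarith

end FPD

/-- **Corollary (paper Cor 15).** The set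
`{T ∈ (0,1) : lim_{n→∞} H(T_n)/n = T}` is dense in `[0,1]`. -/
theorem fixed_points_dense (U : Computer) (hU : IsOptimal U) :
    Set.Icc (0 : ℝ) 1 ⊆ closure {T : ℝ | T ∈ Set.Ioo (0 : ℝ) 1 ∧
      Tendsto (fun n : ℕ => (H U (bits T n) : ℝ) / n) atTop (nhds T)} := by
  have hsub : Set.Ioo (0 : ℝ) 1 ⊆ closure {T : ℝ | T ∈ Set.Ioo (0 : ℝ) 1 ∧
      Tendsto (fun n : ℕ => (H U (bits T n) : ℝ) / n) atTop (nhds T)} := by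
    rintro x ⟨h0, h1⟩
    rw [Metric.mem_closure_iff]
    intro ε hε
    obtain ⟨n, hn⟩ := exists_pow_lt_of_lt_one (show 0 < min ε (min x (1 - x)) by
      simp [hε, h0, h1]) (by norm_num : (1 / 2 : ℝ) < 1)
    simp only [lt_min_iff] at hn
    obtain ⟨n1, n2, n3⟩ := hn
    obtain ⟨s, rfl, a1, a2⟩ := FPD.exists_approx n x h0.le h1
    obtain ⟨T, t1, t2, t3⟩ := FPD.main U hU s
    refine ⟨T, ⟨⟨by linarith, by linarith⟩, t3⟩, ?_⟩
    rw [Real.dist_eq, abs_lt]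
    constructor <;> linarith
  rw [← closure_Ioo (zero_ne_one)]
  exact closure_minimal hsub isClosed_closure
end
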